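/- arXiv:1810.06189 — 2 statements merged into one kernel-verified Lean document; each statement's English description precedes it below -/
import Mathlib

section
/- There exist universal constants C₁, C₂, C₃, C₄, C₅ > 0 with the following property. Let n ≥ 5, let r ∈ [C₂√n, n], and let N ≥ n be an integer with C₁·n·log(Nr/(n√n)) ≤ N ≤ n^{10}. Let θ₁, …, θ_N be independent random vectors uniformly distributed on S^{n−1}. Then there exists q ≥ 1 − C₅√n/r such that with probability at least 1 − e^{−5n}, for every ξ ∈ S^{n−1} and every t ∈ ℝ, (1/N)·Σ_{k=1}^N φ(r⟨ξ, θ_k⟩ + t) ≤ C₃·√(n·log(Nr/(n√n))/N) + (1 + C₄√n/r) · (√n/r) · φ(q·√n·t/r). -/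
open MeasureTheory Metric Set
open scoped RealInnerProductSpace

/-- The uniform (rotation-invariant) probability measure on the unit sphere of `ℝⁿ`. -/
noncomputable def uniformSphere (n : ℕ) :
    Measure (sphere (0 : EuclideanSpace ℝ (Fin n)) 1) :=
  (((volume : Measure (EuclideanSpace ℝ (Fin n))).toSphere) Set.univ)⁻¹ •
    (volume : Measure (EuclideanSpace ℝ (Fin n))).toSphere

/-- `φ(r) = e^{−r²/2}`. -/
noncomputable def gphi (r : ℝ) : ℝ := Real.exp (-r ^ 2 / 2)

/-- `F(η,t) = (1/N) ∑_{k=1}^N φ(r⟨η,θ_k⟩ + t)`. -/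
noncomputable def Ffun {n N : ℕ} (r t : ℝ)
    (θ : Fin N → sphere (0 : EuclideanSpace ℝ (Fin n)) 1)
    (η : EuclideanSpace ℝ (Fin n)) : ℝ :=
  (1 / (N : ℝ)) * ∑ k : Fin N, gphi (r * ⟪η, (θ k : EuclideanSpace ℝ (Fin n))⟫ + t)

/-- The joint law of `N` independent uniform random points on `S^{n-1}`. -/
noncomputable def sphereProduct (n N : ℕ) :
    Measure (Fin N → sphere (0 : EuclideanSpace ℝ (Fin n)) 1) :=
  Measure.pi fun _ => uniformSphere n



lemma ke_polar {n : ℕ} (hn : 1 ≤ n) (h : EuclideanSpace ℝ (Fin n) → ENNReal) (hh : Measurable h)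
    (w : ℝ → ENNReal) (hw : Measurable w) :
    ∫⁻ x : EuclideanSpace ℝ (Fin n), h (‖x‖⁻¹ • x) * w ‖x‖ =
      (∫⁻ θ, h (θ : EuclideanSpace ℝ (Fin n))
        ∂((volume : Measure (EuclideanSpace ℝ (Fin n))).toSphere)) *
      ∫⁻ ρ, w ρ.1 ∂(Measure.volumeIoiPow (n - 1)) := by
  have : Nonempty (Fin n) := ⟨⟨0, hn⟩⟩
  have hm : MeasurableSet ({0}ᶜ : Set (EuclideanSpace ℝ (Fin n))) :=
    (measurableSet_singleton _).compl
  have hmeas : Measurable fun x : EuclideanSpace ℝ (Fin n) => h (‖x‖⁻¹ • x) * w ‖x‖ := by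
    fun_prop
  calc ∫⁻ x : EuclideanSpace ℝ (Fin n), h (‖x‖⁻¹ • x) * w ‖x‖
      = ∫⁻ x in ({0}ᶜ : Set (EuclideanSpace ℝ (Fin n))), h (‖x‖⁻¹ • x) * w ‖x‖ := by
        rw [restrict_compl_singleton]
    _ = ∫⁻ x : ({0}ᶜ : Set (EuclideanSpace ℝ (Fin n))), h (‖x.1‖⁻¹ • x.1) * w ‖x.1‖
          ∂(Measure.comap Subtype.val volume) := by
        rw [lintegral_subtype_comap hm (fun x => h (‖x‖⁻¹ • x) * w ‖x‖)]
    _ = ∫⁻ p, h p.1.1 * w p.2.1 ∂((volume : Measure (EuclideanSpace ℝ (Fin n))).toSphere.prod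
          (Measure.volumeIoiPow (Module.finrank ℝ (EuclideanSpace ℝ (Fin n)) - 1))) := by
        rw [← (Measure.measurePreserving_homeomorphUnitSphereProd
          (volume : Measure (EuclideanSpace ℝ (Fin n)))).lintegral_comp (by fun_prop)]
        simp [homeomorphUnitSphereProd_apply_fst_coe, homeomorphUnitSphereProd_apply_snd_coe]
    _ = _ := by
        rw [lintegral_prod_mul (f := fun θ : sphere (0 : EuclideanSpace ℝ (Fin n)) 1 => h θ.1)
          (g := fun ρ : Ioi (0:ℝ) => w ρ.1) (by fun_prop) (by fun_prop)]
        simp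

/-- squared Euclidean norm on tuples -/
noncomputable def keR {m : ℕ} (y : Fin m → ℝ) : ℝ := Real.sqrt (∑ i, y i ^ 2)

lemma keR_smul {m : ℕ} (s : ℝ) (hs : 0 ≤ s) (y : Fin m → ℝ) : keR (s • y) = s * keR y := by
  unfold keR
  simp only [Pi.smul_apply, smul_eq_mul, mul_pow, ← Finset.mul_sum]
  rw [Real.sqrt_mul (by positivity), Real.sqrt_sq hs]

lemma keR_measurable {m : ℕ} : Measurable (keR : (Fin m → ℝ) → ℝ) := by
  unfold keR; fun_prop

/-- fubini step -/
lemma ke_fubini {m : ℕ} (ξ : EuclideanSpace ℝ (Fin (m+1))) (hξ : ‖ξ‖ = 1)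
    (f : ℝ → ENNReal) (hf : Measurable f) (w : ℝ → ENNReal) (hw : Measurable w) :
    ∫⁻ x : EuclideanSpace ℝ (Fin (m+1)), f ⟪ξ, ‖x‖⁻¹ • x⟫ * w ‖x‖ =
      ∫⁻ y : Fin m → ℝ, ∫⁻ x : ℝ, f (x / Real.sqrt (x^2 + keR y ^ 2)) *
        w (Real.sqrt (x^2 + keR y ^ 2)) := by
  set e0 : EuclideanSpace ℝ (Fin (m+1)) := EuclideanSpace.single 0 1 with he0
  have hn : ‖ξ‖ = ‖e0‖ := by simp [hξ, he0]
  set T := Submodule.reflection (ℝ ∙ (ξ - e0))ᗮ with hT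
  have hTξ : T ξ = e0 := Submodule.reflection_sub hn
  have h1 : ∫⁻ x : EuclideanSpace ℝ (Fin (m+1)), f ⟪ξ, ‖x‖⁻¹ • x⟫ * w ‖x‖
      = ∫⁻ x : EuclideanSpace ℝ (Fin (m+1)), f ⟪e0, ‖x‖⁻¹ • x⟫ * w ‖x‖ := by
    rw [← T.measurePreserving.lintegral_comp (f := fun x => f ⟪e0, ‖x‖⁻¹ • x⟫ * w ‖x‖)
      (by fun_prop)]
    congr 1 with x
    rw [T.norm_map, ← T.map_smul, ← hTξ, T.inner_map_map]
  rw [h1, ← (PiLp.volume_preserving_toLp (Fin (m+1))).lintegral_comp (by fun_prop)]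
  have h2 := (MeasureTheory.volume_preserving_piFinSuccAbove (fun _ : Fin (m + 1) => ℝ) 0).symm
  rw [← h2.lintegral_comp (by fun_prop)]
  rw [Measure.volume_eq_prod, lintegral_prod_symm']
  · congr 1 with y
    congr 1 with x
    have hnorm : ‖(WithLp.toLp 2 ((MeasurableEquiv.piFinSuccAbove (fun _ => ℝ) 0).symm (x, y)) :
        EuclideanSpace ℝ (Fin (m+1)))‖ = Real.sqrt (x^2 + keR y ^ 2) := by
      rw [EuclideanSpace.norm_eq, keR, Real.sq_sqrt (by positivity)]
      simp [Fin.sum_univ_succ, MeasurableEquiv.piFinSuccAbove]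
    rw [hnorm]
    congr 2
    simp [he0, inner_smul_right, EuclideanSpace.inner_single_left, MeasurableEquiv.piFinSuccAbove]
    field_simp
  · fun_prop

lemma ke_s_pos {u : ℝ} (hu : u ∈ Ioo (-1:ℝ) 1) : 0 < Real.sqrt (1 - u^2) := by
  apply Real.sqrt_pos.2
  nlinarith [hu.1, hu.2]

lemma ke_cov (R : ℝ) (hR : 0 < R) (H : ℝ → ENNReal) :
    ∫⁻ x, H x = ∫⁻ u in Ioo (-1:ℝ) 1, ENNReal.ofReal (R * (Real.sqrt (1 - u^2) ^ 3)⁻¹) *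
      H (R * u / Real.sqrt (1 - u^2)) := by
  have key := lintegral_image_eq_lintegral_abs_deriv_mul (s := Ioo (-1:ℝ) 1)
    (f := fun u => R * u / Real.sqrt (1 - u^2)) (f' := fun u => R * (Real.sqrt (1 - u^2) ^ 3)⁻¹)
    measurableSet_Ioo ?_ ?_ H
  · have himg : (fun u => R * u / Real.sqrt (1 - u^2)) '' Ioo (-1:ℝ) 1 = univ := by
      apply eq_univ_of_forall
      intro x
      have hp : 0 < x^2 + R^2 := by positivity
      have hlt : |x| < Real.sqrt (x^2+R^2) := by
        rw [← Real.sqrt_sq_eq_abs]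
        apply Real.sqrt_lt_sqrt (by positivity); nlinarith
      have hsp : 0 < Real.sqrt (x^2+R^2) := Real.sqrt_pos.2 hp
      refine ⟨x / Real.sqrt (x^2+R^2), ?_, ?_⟩
      · rw [mem_Ioo, ← abs_lt, abs_div, abs_of_pos hsp, div_lt_one hsp]
        exact hlt
      · have : 1 - (x / Real.sqrt (x^2+R^2))^2 = (R / Real.sqrt (x^2+R^2))^2 := by
          rw [div_pow, div_pow, Real.sq_sqrt hp.le]; field_simp; ring
        simp only
        rw [this, Real.sqrt_sq (by positivity)]
        field_simp
    rw [himg, Measure.restrict_univ] at key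
    rw [key]
    apply setLIntegral_congr_fun measurableSet_Ioo
    intro u hu
    have := ke_s_pos hu
    simp only
    rw [abs_of_pos (by positivity)]
  · intro u hu
    have hs := ke_s_pos hu
    apply HasDerivAt.hasDerivWithinAt
    have h1 : HasDerivAt (fun u : ℝ => 1 - u^2) (-(2*u)) u := by
      simpa using (hasDerivAt_pow 2 u).const_sub 1
    have h2 := h1.sqrt (Real.sqrt_pos.1 hs).ne'
    have h3 := ((hasDerivAt_id u).const_mul R).div h2 hs.ne'
    have hsq : Real.sqrt (1 - u^2) ^ 2 = 1 - u^2 := Real.sq_sqrt (Real.sqrt_pos.1 hs).le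
    have h4 : R * (Real.sqrt (1 - u^2) ^ 3)⁻¹ = (R * 1 * Real.sqrt (1 - u^2) -
        R * id u * (-(2 * u) / (2 * Real.sqrt (1 - u^2)))) / Real.sqrt (1 - u^2) ^ 2 := by
      simp only [id]
      field_simp
      rw [hsq]; ring
    rw [h4]
    exact h3
  · intro u hu v hv huv
    have hs := ke_s_pos hu
    have ht := ke_s_pos hv
    have hsq : Real.sqrt (1 - u^2) ^ 2 = 1 - u^2 := Real.sq_sqrt (Real.sqrt_pos.1 hs).le
    have htq : Real.sqrt (1 - v^2) ^ 2 = 1 - v^2 := Real.sq_sqrt (Real.sqrt_pos.1 ht).le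
    simp only at huv
    rw [div_eq_div_iff hs.ne' ht.ne', mul_assoc, mul_assoc] at huv
    have h4 := mul_left_cancel₀ hR.ne' huv
    have h5 : u^2 = v^2 := by
      have : (u * Real.sqrt (1 - v^2))^2 = (v * Real.sqrt (1 - u^2))^2 := by rw [h4]
      rw [mul_pow, mul_pow, hsq, htq] at this
      linarith
    rw [h5] at h4
    exact mul_right_cancel₀ ht.ne' h4

lemma ke_scale {m : ℕ} (s : ℝ) (hs : 0 < s) (Φ : (Fin m → ℝ) → ENNReal) (hΦ : Measurable Φ) :
    ∫⁻ y, Φ (s⁻¹ • y) = ENNReal.ofReal (s ^ m) * ∫⁻ y, Φ y := by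
  have h := Measure.map_addHaar_smul (volume : Measure (Fin m → ℝ)) (r := s⁻¹) (by positivity)
  have : ∫⁻ y, Φ (s⁻¹ • y) = ∫⁻ y, Φ y ∂(Measure.map (s⁻¹ • ·) (volume : Measure (Fin m → ℝ))) := by
    rw [lintegral_map hΦ (by fun_prop)]
  rw [this, h, lintegral_smul_measure]
  simp [abs_of_pos hs]

/-- the constant -/
noncomputable def keK (m : ℕ) : ENNReal :=
  ∫⁻ y : Fin m → ℝ, ENNReal.ofReal (keR y * Real.exp (- keR y ^ 2 / 2))

lemma keR_nonneg {m : ℕ} (y : Fin m → ℝ) : 0 ≤ keR y := Real.sqrt_nonneg _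

lemma keR_pos_ae {m : ℕ} (hm : 1 ≤ m) : ∀ᵐ y : Fin m → ℝ, 0 < keR y := by
  have : Nonempty (Fin m) := ⟨⟨0, hm⟩⟩
  have h : ∀ᵐ y : Fin m → ℝ, y ≠ 0 := by
    simp [ae_iff]
  filter_upwards [h] with y hy
  apply Real.sqrt_pos.2
  obtain ⟨i, hi⟩ := Function.ne_iff.1 hy
  have hi' : y i ≠ 0 := hi
  exact Finset.sum_pos' (fun i _ => sq_nonneg _) ⟨i, Finset.mem_univ _, by positivity⟩

lemma ke_marg {m : ℕ} (hm : 2 ≤ m) (ξ : EuclideanSpace ℝ (Fin (m+1))) (hξ : ‖ξ‖ = 1)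
    (f : ℝ → ENNReal) (hf : Measurable f) :
    ∫⁻ x : EuclideanSpace ℝ (Fin (m+1)), f ⟪ξ, ‖x‖⁻¹ • x⟫ *
        ENNReal.ofReal (Real.exp (-‖x‖^2/2)) =
      keK m * ∫⁻ u in Ioo (-1:ℝ) 1, f u * ENNReal.ofReal (Real.sqrt (1 - u^2) ^ (m-2)) := by
  rw [ke_fubini ξ hξ f hf (fun ρ => ENNReal.ofReal (Real.exp (-ρ^2/2))) (by fun_prop)]
  have hRm : Measurable (keR : (Fin m → ℝ) → ℝ) := keR_measurable
  have h1 : ∀ᵐ y : Fin m → ℝ, ∫⁻ x : ℝ, f (x / Real.sqrt (x^2 + keR y ^ 2)) *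
        ENNReal.ofReal (Real.exp (-(Real.sqrt (x^2 + keR y ^ 2))^2/2)) =
      ∫⁻ u in Ioo (-1:ℝ) 1, (f u * ENNReal.ofReal ((Real.sqrt (1 - u^2) ^ 3)⁻¹)) *
        ENNReal.ofReal (keR y * Real.exp (-(keR y / Real.sqrt (1 - u^2))^2/2)) := by
    filter_upwards [keR_pos_ae (m := m) (by omega)] with y hy
    rw [ke_cov (keR y) hy]
    apply setLIntegral_congr_fun measurableSet_Ioo
    intro u hu
    have hs := ke_s_pos hu
    have hsq : Real.sqrt (1 - u^2) ^ 2 = 1 - u^2 := Real.sq_sqrt (Real.sqrt_pos.1 hs).le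
    simp only
    set s := Real.sqrt (1 - u^2) with hsdef
    have e1 : Real.sqrt ((keR y * u / s)^2 + keR y ^ 2) = keR y / s := by
      rw [← Real.sqrt_sq (show 0 ≤ keR y / s by positivity)]
      congr 1
      field_simp
      rw [hsq]; ring
    have e2 : keR y * u / s / (keR y / s) = u := by field_simp
    rw [e1, e2, ENNReal.ofReal_mul hy.le, ENNReal.ofReal_mul hy.le]
    ring
  rw [lintegral_congr_ae h1, lintegral_lintegral_swap,
    ← lintegral_const_mul _ (by fun_prop)]
  · apply setLIntegral_congr_fun measurableSet_Ioo
    intro u hu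
    have hs := ke_s_pos hu
    simp only
    set s := Real.sqrt (1 - u^2) with hsdef
    rw [lintegral_const_mul _ (by fun_prop)]
    have e3 : ∫⁻ y : Fin m → ℝ, ENNReal.ofReal (keR y * Real.exp (-(keR y / s)^2/2)) =
        ∫⁻ y : Fin m → ℝ, ENNReal.ofReal s * ENNReal.ofReal (keR (s⁻¹ • y) *
          Real.exp (-(keR (s⁻¹ • y))^2/2)) := by
      congr 1 with y
      rw [keR_smul _ (by positivity), ← ENNReal.ofReal_mul hs.le]
      congr 1
      field_simp
    rw [e3, lintegral_const_mul _ (by fun_prop), ke_scale s hs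
      (fun y => ENNReal.ofReal (keR y * Real.exp (-(keR y)^2/2))) (by fun_prop)]
    change _ * (_ * (_ * keK m)) = _
    have e4 : ENNReal.ofReal (s ^ (m-2)) = ENNReal.ofReal ((s^3)⁻¹) * ENNReal.ofReal s *
        ENNReal.ofReal (s^m) := by
      rw [← ENNReal.ofReal_mul (by positivity), ← ENNReal.ofReal_mul (by positivity)]
      congr 1
      obtain ⟨k, rfl⟩ := Nat.exists_eq_add_of_le hm
      rw [Nat.add_sub_cancel_left, pow_add]
      field_simp
    rw [e4]; ring
  · fun_prop

lemma ke_wallis (k : ℕ) : ((k:ℝ)+1) * ((∫ x in (0:ℝ)..Real.pi, Real.sin x ^ k) *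
    (∫ x in (0:ℝ)..Real.pi, Real.sin x ^ (k+1))) = 2 * Real.pi := by
  induction k with
  | zero => simp; ring
  | succ k ih =>
    rw [show k + 1 + 1 = k + 2 from rfl, integral_sin_pow k]
    simp only [Real.sin_zero, Real.sin_pi]
    rw [← ih]
    push_cast
    field_simp
    ring

lemma ke_I (k : ℕ) : ∫ u in (-1:ℝ)..1, Real.sqrt (1 - u^2) ^ k =
    ∫ x in (0:ℝ)..Real.pi, Real.sin x ^ (k+1) := by
  have h := intervalIntegral.integral_comp_mul_deriv (a := 0) (b := Real.pi)
    (f := Real.cos) (f' := fun x => - Real.sin x) (g := fun u => Real.sqrt (1 - u^2) ^ k)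
    (fun x _ => Real.hasDerivAt_cos x) (by fun_prop) (by fun_prop)
  simp only [Real.cos_zero, Real.cos_pi, Function.comp] at h
  rw [intervalIntegral.integral_symm, ← h, ← intervalIntegral.integral_neg]
  apply intervalIntegral.integral_congr
  intro x hx
  rw [uIcc_of_le Real.pi_pos.le] at hx
  have : Real.sqrt (1 - Real.cos x ^ 2) = Real.sin x := by
    rw [← Real.abs_sin_eq_sqrt_one_sub_cos_sq, abs_of_nonneg (Real.sin_nonneg_of_mem_Icc hx)]
  simp only [this]
  ring

lemma ke_I_lower (k : ℕ) :
    Real.sqrt (2 * Real.pi / (k+2)) ≤ ∫ u in (-1:ℝ)..1, Real.sqrt (1 - u^2) ^ k := by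
  rw [ke_I]
  have hp : 0 < ∫ x in (0:ℝ)..Real.pi, Real.sin x ^ (k+1) := integral_sin_pow_pos _
  have hle : (∫ x in (0:ℝ)..Real.pi, Real.sin x ^ (k+1+1)) ≤ ∫ x in (0:ℝ)..Real.pi, Real.sin x ^ (k+1) :=
    integral_sin_pow_succ_le _
  have hw := ke_wallis (k+1)
  apply Real.sqrt_le_iff.2 ⟨hp.le, ?_⟩
  rw [div_le_iff₀ (by positivity), ← hw]
  push_cast
  have : (∫ x in (0:ℝ)..Real.pi, Real.sin x ^ (k+1)) * (∫ x in (0:ℝ)..Real.pi, Real.sin x ^ (k+1+1)) ≤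
    (∫ x in (0:ℝ)..Real.pi, Real.sin x ^ (k+1)) ^ 2 := by nlinarith
  nlinarith

lemma ke_J1 (k : ℕ) : ∫⁻ u in Ioo (-1:ℝ) 1, ENNReal.ofReal (Real.sqrt (1 - u^2) ^ k) =
    ENNReal.ofReal (∫ u in (-1:ℝ)..1, Real.sqrt (1 - u^2) ^ k) := by
  have hc : Continuous fun u : ℝ => Real.sqrt (1 - u^2) ^ k := by fun_prop
  rw [intervalIntegral.integral_of_le (by norm_num), ← integral_Ioc_eq_integral_Ioo.symm,
    ofReal_integral_eq_lintegral_ofReal]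
  · exact ((hc.integrableOn_Icc (a := -1) (b := 1)).mono_set Ioo_subset_Icc_self)
  · exact Filter.Eventually.of_forall fun u => by positivity

lemma ke_Z_ne_top (n : ℕ) : ∫⁻ x : EuclideanSpace ℝ (Fin n),
    ENNReal.ofReal (Real.exp (-‖x‖^2/2)) ≠ ⊤ := by
  have h := GaussianFourier.integrable_cexp_neg_mul_sq_norm_add (V := EuclideanSpace ℝ (Fin n))
    (b := (1/2 : ℂ)) (by norm_num) 0 0
  have h2 := h.norm.lintegral_lt_top
  refine ne_of_lt (lt_of_eq_of_lt ?_ h2)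
  congr 1 with x
  congr 1
  rw [Complex.norm_exp]
  congr 1
  simp [← Complex.ofReal_pow]
  ring

lemma ke_Z_ne_zero (n : ℕ) : ∫⁻ x : EuclideanSpace ℝ (Fin n),
    ENNReal.ofReal (Real.exp (-‖x‖^2/2)) ≠ 0 := by
  rw [Ne, lintegral_eq_zero_iff (by fun_prop)]
  intro h
  have : ∀ᵐ x : EuclideanSpace ℝ (Fin n), False := by
    filter_upwards [h] with x hx
    simp at hx
    exact absurd hx (not_le.2 (Real.exp_pos _))
  simp at this
  exact absurd this (NeZero.ne _)

instance ke_prob (n : ℕ) [NeZero n] : IsProbabilityMeasure (uniformSphere n) := by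
  constructor
  unfold uniformSphere
  rw [Measure.smul_apply, smul_eq_mul]
  apply ENNReal.inv_mul_cancel
  · have : Nonempty (Fin n) := ⟨0⟩
    rw [Ne, Measure.measure_univ_eq_zero]
    exact Measure.toSphere_ne_zero _
  · exact measure_ne_top _ _

lemma ke_marginal {m : ℕ} (hm : 2 ≤ m) (ξ : EuclideanSpace ℝ (Fin (m+1))) (hξ : ‖ξ‖ = 1)
    (f : ℝ → ENNReal) (hf : Measurable f) :
    (∫⁻ θ, f ⟪ξ, (θ : EuclideanSpace ℝ (Fin (m+1)))⟫ ∂(uniformSphere (m+1))) *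
      ENNReal.ofReal (∫ u in (-1:ℝ)..1, Real.sqrt (1 - u^2) ^ (m-2)) =
      ∫⁻ u in Ioo (-1:ℝ) 1, f u * ENNReal.ofReal (Real.sqrt (1 - u^2) ^ (m-2)) := by
  have hpol : ∀ f : ℝ → ENNReal, Measurable f → _ := fun f hf =>
    ke_polar (n := m+1) (by omega) (fun x => f ⟪ξ, x⟫) (by fun_prop)
    (fun ρ => ENNReal.ofReal (Real.exp (-ρ^2/2))) (by fun_prop)
  have A := hpol f hf
  have B := hpol (fun _ => 1) (by fun_prop)
  have A' := ke_marg hm ξ hξ f hf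
  have B' := ke_marg hm ξ hξ (fun _ => 1) (by fun_prop)
  simp only [one_mul, lintegral_one] at B B'
  rw [A] at A'
  have Zt := ke_Z_ne_top (m+1)
  have Z0 := ke_Z_ne_zero (m+1)
  have hJ := ke_J1 (m-2)
  rw [hJ] at B'
  unfold uniformSphere
  rw [lintegral_smul_measure, smul_eq_mul]
  set S := ∫⁻ θ, f ⟪ξ, (θ : EuclideanSpace ℝ (Fin (m+1)))⟫
    ∂((volume : Measure (EuclideanSpace ℝ (Fin (m+1)))).toSphere)
  set U := (volume : Measure (EuclideanSpace ℝ (Fin (m+1)))).toSphere univ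
  set V := ∫⁻ ρ : Ioi (0:ℝ), ENNReal.ofReal (Real.exp (-ρ.1^2/2)) ∂(Measure.volumeIoiPow (m+1-1))
  set J := ∫⁻ u in Ioo (-1:ℝ) 1, f u * ENNReal.ofReal (Real.sqrt (1 - u^2) ^ (m-2))
  set I := ENNReal.ofReal (∫ u in (-1:ℝ)..1, Real.sqrt (1 - u^2) ^ (m-2))
  have UV0 : U * V ≠ 0 := B ▸ Z0
  have UVt : U * V ≠ ⊤ := B ▸ Zt
  have hU0 : U ≠ 0 := left_ne_zero_of_mul UV0
  have hV0 : V ≠ 0 := right_ne_zero_of_mul UV0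
  have hUt : U ≠ ⊤ := measure_ne_top _ _
  have hVt : V ≠ ⊤ := fun h => UVt (by rw [h, ENNReal.mul_top hU0])
  have hUVK : U * V = keK m * I := B ▸ B'
  have h1 : V * (S * I) = V * (U * J) := by
    calc V * (S * I) = (S * V) * I := by ring
      _ = (keK m * I) * J := by rw [A']; ring
      _ = V * (U * J) := by rw [← hUVK]; ring
  have h2 : S * I = U * J := (ENNReal.mul_right_inj hV0 hVt).1 h1
  rw [mul_assoc, h2, ← mul_assoc, ENNReal.inv_mul_cancel hU0 hUt, one_mul]

lemma ke_marginal_le {n : ℕ} (hn : 5 ≤ n) (ξ : EuclideanSpace ℝ (Fin n)) (hξ : ‖ξ‖ = 1)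
    (f : ℝ → ENNReal) (hf : Measurable f) :
    (∫⁻ θ, f ⟪ξ, (θ : EuclideanSpace ℝ (Fin n))⟫ ∂(uniformSphere n)) ≤
      ENNReal.ofReal (Real.sqrt (((n:ℝ)-1) / (2*Real.pi))) *
      ∫⁻ u, f u * ENNReal.ofReal (Real.exp (-((n:ℝ)-3) * u^2/2)) := by
  obtain ⟨m, rfl⟩ : ∃ m, n = m + 1 := ⟨n-1, by omega⟩
  have h := ke_marginal (m := m) (by omega) ξ hξ f hf
  obtain ⟨k, rfl⟩ : ∃ k, m = k + 2 := ⟨m-2, by omega⟩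
  rw [show k + 2 - 2 = k by omega] at h
  have hlow := ke_I_lower k
  set E := ∫⁻ θ, f ⟪ξ, (θ : EuclideanSpace ℝ (Fin (k+2+1)))⟫ ∂(uniformSphere (k+2+1))
  set I := ∫ u in (-1:ℝ)..1, Real.sqrt (1 - u^2) ^ k
  have hprod : Real.sqrt ((((k+2+1:ℕ):ℝ)-1) / (2*Real.pi)) * Real.sqrt (2 * Real.pi / (k+2)) = 1 := by
    rw [← Real.sqrt_mul]
    · rw [Real.sqrt_eq_one]
      push_cast
      have := Real.pi_pos
      field_simp
      ring
    · push_cast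
      have := Real.pi_pos
      apply div_nonneg <;> nlinarith
  have hIJ : ∫⁻ u in Ioo (-1:ℝ) 1, f u * ENNReal.ofReal (Real.sqrt (1 - u^2) ^ k) ≤
      ∫⁻ u, f u * ENNReal.ofReal (Real.exp (-(((k+2+1:ℕ):ℝ)-3) * u^2/2)) := by
    refine le_trans (lintegral_mono fun u => ?_) (setLIntegral_le_lintegral (Ioo (-1:ℝ) 1) _)
    gcongr
    have h1 : Real.sqrt (1 - u^2) ≤ Real.exp (-u^2/2) := by
      apply Real.sqrt_le_iff.2 ⟨(Real.exp_pos _).le, ?_⟩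
      rw [← Real.exp_nat_mul]
      have := Real.add_one_le_exp (-u^2)
      refine le_trans (by linarith) (this.trans_eq ?_)
      congr 1; push_cast; ring
    calc _ ≤ (Real.exp (-u^2/2)) ^ k := by gcongr
      _ = _ := by
        rw [← Real.exp_nat_mul]; congr 1; push_cast; ring
  calc E = E * ENNReal.ofReal (Real.sqrt (2 * Real.pi / (k+2))) *
        ENNReal.ofReal (Real.sqrt ((((k+2+1:ℕ):ℝ)-1) / (2*Real.pi))) := by
        rw [mul_assoc, ← ENNReal.ofReal_mul (Real.sqrt_nonneg _), mul_comm (Real.sqrt _), hprod]; simp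
    _ ≤ E * ENNReal.ofReal I * ENNReal.ofReal (Real.sqrt ((((k+2+1:ℕ):ℝ)-1) / (2*Real.pi))) := by
        gcongr
    _ ≤ _ := by
        rw [h, mul_comm]; gcongr

lemma ke_gauss (b c : ℝ) (hb : 0 < b) :
    ∫⁻ u : ℝ, ENNReal.ofReal (Real.exp (-b * (u + c)^2)) = ENNReal.ofReal (Real.sqrt (Real.pi / b)) := by
  rw [lintegral_add_right_eq_self (fun u : ℝ => ENNReal.ofReal (Real.exp (-b * u^2))) c,
    ← integral_gaussian, ofReal_integral_eq_lintegral_ofReal (integrable_exp_neg_mul_sq hb)]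
  exact Filter.Eventually.of_forall fun u => (Real.exp_pos _).le

lemma ke_exp_sq {n : ℕ} (hn : 5 ≤ n) (ξ : EuclideanSpace ℝ (Fin n)) (hξ : ‖ξ‖ = 1) :
    (∫⁻ θ, ENNReal.ofReal (Real.exp (n * ⟪ξ, (θ : EuclideanSpace ℝ (Fin n))⟫^2/10))
      ∂(uniformSphere n)) ≤ ENNReal.ofReal 2 := by
  have hn' : (5:ℝ) ≤ n := by exact_mod_cast hn
  refine (ke_marginal_le hn ξ hξ (fun u => ENNReal.ofReal (Real.exp (n * u^2/10)))
    (by fun_prop)).trans ?_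
  have hπ := Real.pi_pos
  have : ∀ u : ℝ, ENNReal.ofReal (Real.exp (n * u^2/10)) *
      ENNReal.ofReal (Real.exp (-((n:ℝ)-3) * u^2/2)) ≤
      ENNReal.ofReal (Real.exp (-(((n:ℝ)-3)/4) * (u+0)^2)) := by
    intro u
    rw [← ENNReal.ofReal_mul (Real.exp_pos _).le, ← Real.exp_add]
    gcongr
    nlinarith [sq_nonneg u]
  calc _ ≤ ENNReal.ofReal (Real.sqrt (((n:ℝ)-1) / (2*Real.pi))) *
        ∫⁻ u : ℝ, ENNReal.ofReal (Real.exp (-(((n:ℝ)-3)/4) * (u+0)^2)) := by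
        gcongr; exact this _
    _ ≤ _ := by
        rw [ke_gauss _ _ (by linarith), ← ENNReal.ofReal_mul (Real.sqrt_nonneg _), ← Real.sqrt_mul]
        · gcongr
          rw [Real.sqrt_le_left (by norm_num)]
          have h3 : (0:ℝ) < n - 3 := by linarith
          have : ((n:ℝ) - 1) / (2 * Real.pi) * (Real.pi / ((n - 3) / 4)) = 2 * (n-1) / (n-3) := by
            field_simp; ring
          rw [this, div_le_iff₀ h3]; linarith
        · apply div_nonneg <;> linarith

lemma ke_gphi_abs_le {a b : ℝ} (h : |a| ≤ |b|) : gphi b ≤ gphi a := by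
  unfold gphi
  have := sq_le_sq.2 h
  gcongr


lemma ke_mean {n : ℕ} (hn : 5 ≤ n) (ξ : EuclideanSpace ℝ (Fin n)) (hξ : ‖ξ‖ = 1) (r t : ℝ)
    (hr : 4 * Real.sqrt n ≤ r) (hrn : r ≤ n) :
    (∫⁻ θ, ENNReal.ofReal (gphi (r * ⟪ξ, (θ : EuclideanSpace ℝ (Fin n))⟫ + t))
      ∂(uniformSphere n)) ≤ ENNReal.ofReal (Real.sqrt n / r *
        gphi ((1 - 4 * Real.sqrt n / r) * Real.sqrt n * t / r)) := by
  have hn' : (5:ℝ) ≤ n := by exact_mod_cast hn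
  have hsn : 2 ≤ Real.sqrt n := Real.le_sqrt_of_sq_le (by linarith)
  have hsq : Real.sqrt n ^ 2 = n := Real.sq_sqrt (by linarith)
  have hr0 : 0 < r := by linarith
  have hr2 : (n:ℝ) ≤ r^2 := by nlinarith
  refine (ke_marginal_le hn ξ hξ (fun u => ENNReal.ofReal (gphi (r * u + t)))
    (by unfold gphi; fun_prop)).trans ?_
  have hπ := Real.pi_pos
  set D : ℝ := n - 3 + r^2 with hD
  have hDpos : 0 < D := by nlinarith
  have e1 : ∀ u : ℝ, ENNReal.ofReal (gphi (r * u + t)) *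
      ENNReal.ofReal (Real.exp (-((n:ℝ)-3) * u^2/2)) =
      ENNReal.ofReal (Real.exp (-(t^2 * (n-3)/D)/2)) *
      ENNReal.ofReal (Real.exp (-(D/2) * (u+r*t/D)^2)) := by
    intro u
    unfold gphi
    rw [← ENNReal.ofReal_mul (Real.exp_pos _).le, ← Real.exp_add,
      ← ENNReal.ofReal_mul (Real.exp_pos _).le, ← Real.exp_add]
    congr 2
    field_simp
    rw [hD]; ring
  simp_rw [e1]
  rw [lintegral_const_mul _ (by fun_prop), ke_gauss _ _ (by positivity),
    ← ENNReal.ofReal_mul (Real.exp_pos _).le, ← ENNReal.ofReal_mul (Real.sqrt_nonneg _)]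
  apply ENNReal.ofReal_le_ofReal
  have e2 : Real.sqrt (((n:ℝ)-1) / (2*Real.pi)) * Real.sqrt (Real.pi / (D/2)) ≤ Real.sqrt n / r := by
    rw [← Real.sqrt_mul (by apply div_nonneg <;> linarith)]
    apply Real.sqrt_le_iff.2 ⟨by positivity, ?_⟩
    have : ((n:ℝ)-1) / (2*Real.pi) * (Real.pi / (D/2)) = (n-1)/D := by field_simp
    rw [this, div_pow, hsq, div_le_div_iff₀ hDpos (by positivity)]
    rw [hD]; nlinarith
  have e3 : Real.exp (-(t^2 * (n-3)/D)/2) ≤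
      gphi ((1 - 4 * Real.sqrt n / r) * Real.sqrt n * t / r) := by
    unfold gphi
    apply Real.exp_le_exp.2
    have ha : 4 * Real.sqrt n / r ≤ 1 := by rw [div_le_one hr0]; exact hr
    have ha0 : 0 ≤ 4 * Real.sqrt n / r := by positivity
    set a := 4 * Real.sqrt n / r with hadef
    have e4 : (1 - a)^2 * n / r^2 ≤ (n-3)/D := by
      have h1 : (1-a)^2 ≤ 1 - a := by nlinarith
      have h2 : (1-a) * n / r^2 ≤ (n-3)/D := by
        rw [div_le_div_iff₀ (by positivity) hDpos]
        have har : a * r = 4 * Real.sqrt n := by rw [hadef]; field_simp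
        have har2 : a * r^2 = 4 * Real.sqrt n * r := by rw [pow_two, ← mul_assoc, har]
        have k1 : (n:ℝ) * (a * r^2) = 4 * n * (Real.sqrt n * r) := by rw [har2]; ring
        have k2 : 4 * (Real.sqrt n * r) ≥ 16 * n := by nlinarith
        have k3 : r^2 ≤ (n:ℝ) * r := by nlinarith
        have k4 : (n:ℝ) * (Real.sqrt n * r) ≥ 2 * (n * r) := by
          have : (0:ℝ) ≤ n * r := by positivity
          nlinarith
        have k5 : 0 ≤ a * n * (n-3) := by
          apply mul_nonneg (by positivity); linarith
        have k6 : (n:ℝ) * (Real.sqrt n * r) ≥ 4 * n * n := by nlinarith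
        rw [hD]
        nlinarith
      calc (1 - a)^2 * n / r^2 ≤ (1-a) * n / r^2 := by gcongr
        _ ≤ _ := h2
    have e5 : ((1 - a) * Real.sqrt n * t / r)^2 = (1 - a)^2 * n / r^2 * t^2 := by
      rw [← hsq]; field_simp; simp [hsq]
    rw [e5]
    have e6 : t^2 * (n-3)/D = (n-3)/D * t^2 := by ring
    rw [e6]
    have := mul_le_mul_of_nonneg_right e4 (sq_nonneg t)
    linarith
  calc _ = Real.sqrt (((n:ℝ)-1) / (2*Real.pi)) * Real.sqrt (Real.pi / (D/2)) *
        Real.exp (-(t^2 * (n-3)/D)/2) := by ring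
    _ ≤ _ := by gcongr

lemma ke_card_bound {n : ℕ} (hn : 1 ≤ n) (δ : ℝ) (hδ : 0 < δ) (hδ1 : δ ≤ 1)
    (S : Finset (EuclideanSpace ℝ (Fin n))) (hS : ∀ x ∈ S, ‖x‖ = 1)
    (hsep : ∀ x ∈ S, ∀ y ∈ S, x ≠ y → δ < ‖x - y‖) : (S.card : ℝ) ≤ (3/δ)^n := by
  have : Nonempty (Fin n) := ⟨⟨0, hn⟩⟩
  set μ := (volume : Measure (EuclideanSpace ℝ (Fin n)))
  have hdisj : (S : Set (EuclideanSpace ℝ (Fin n))).PairwiseDisjoint (fun x => ball x (δ/2)) := by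
    intro x hx y hy hxy
    apply ball_disjoint_ball
    rw [dist_eq_norm]
    linarith [hsep x hx y hy hxy]
  have hsub : (⋃ x ∈ S, ball x (δ/2)) ⊆ ball (0 : EuclideanSpace ℝ (Fin n)) (3/2) := by
    intro z hz
    simp only [mem_iUnion] at hz
    obtain ⟨x, hx, hz⟩ := hz
    have h1 : dist z 0 ≤ dist z x + dist x 0 := dist_triangle _ _ _
    rw [dist_zero_right x, hS x hx] at h1
    rw [mem_ball] at hz ⊢
    linarith
  have h1 := measure_mono (μ := μ) hsub
  rw [measure_biUnion_finset hdisj (fun x _ => measurableSet_ball)] at h1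
  rw [Finset.sum_congr rfl (fun x _ => Measure.addHaar_ball μ x (show 0 ≤ δ/2 by positivity)),
    Measure.addHaar_ball μ 0 (show (0:ℝ) ≤ 3/2 by norm_num), Finset.sum_const, nsmul_eq_mul, ← mul_assoc,
    ENNReal.mul_le_mul_iff_left (measure_ball_pos μ _ one_pos).ne' measure_ball_lt_top.ne,
    ← ENNReal.ofReal_natCast, ← ENNReal.ofReal_mul (by positivity),
    ENNReal.ofReal_le_ofReal_iff (by positivity), finrank_euclideanSpace_fin] at h1
  rw [← le_div_iff₀ (by positivity), ← div_pow] at h1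
  have h2 : 3 / δ = 3 / 2 / (δ / 2) := by field_simp
  rw [h2]
  exact h1

lemma ke_net {n : ℕ} (hn : 1 ≤ n) (δ : ℝ) (hδ : 0 < δ) (hδ1 : δ ≤ 1) :
    ∃ S : Finset (EuclideanSpace ℝ (Fin n)), (∀ x ∈ S, ‖x‖ = 1) ∧
      (∀ ξ : EuclideanSpace ℝ (Fin n), ‖ξ‖ = 1 → ∃ x ∈ S, ‖ξ - x‖ ≤ δ) ∧
      (S.card : ℝ) ≤ (3/δ)^n := by
  classical
  by_contra hcon
  have key : ∀ k : ℕ, ∃ S : Finset (EuclideanSpace ℝ (Fin n)), S.card = k ∧ (∀ x ∈ S, ‖x‖ = 1) ∧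
      (∀ x ∈ S, ∀ y ∈ S, x ≠ y → δ < ‖x - y‖) := by
    intro k
    induction k with
    | zero => exact ⟨∅, by simp⟩
    | succ k ih =>
      obtain ⟨S, hk, hS, hsep⟩ := ih
      have hnc : ¬ ∀ ξ : EuclideanSpace ℝ (Fin n), ‖ξ‖ = 1 → ∃ x ∈ S, ‖ξ - x‖ ≤ δ := fun h =>
        hcon ⟨S, hS, h, ke_card_bound hn δ hδ hδ1 S hS hsep⟩
      push Not at hnc
      obtain ⟨ξ, hξ, hfar⟩ := hnc
      have hnot : ξ ∉ S := fun h => by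
        have := hfar ξ h
        simp at this
        linarith
      refine ⟨insert ξ S, by rw [Finset.card_insert_of_notMem hnot, hk], ?_, ?_⟩
      · intro x hx
        rcases Finset.mem_insert.1 hx with rfl | hx
        · exact hξ
        · exact hS x hx
      · intro x hx y hy hxy
        rcases Finset.mem_insert.1 hx with hx' | hx' <;>
          rcases Finset.mem_insert.1 hy with hy' | hy'
        · exact absurd (hx'.trans hy'.symm) hxy
        · rw [hx']; exact hfar y hy'
        · rw [hy', norm_sub_rev]; exact hfar x hx'
        · exact hsep x hx' y hy' hxy
  obtain ⟨k, hk⟩ := exists_nat_gt ((3/δ)^n)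
  obtain ⟨S, hc, hS, hsep⟩ := key k
  have := ke_card_bound hn δ hδ hδ1 S hS hsep
  rw [hc] at this
  linarith

lemma ke_hoeffding {n N : ℕ} [NeZero n] (hN : 0 < N)
    (X : sphere (0 : EuclideanSpace ℝ (Fin n)) 1 → ℝ) (hX : Measurable X)
    (h01 : ∀ θ, X θ ∈ Icc (0:ℝ) 1) (A : ℝ) (hA0 : 0 ≤ A)
    (hA : ∫⁻ θ, ENNReal.ofReal (X θ) ∂(uniformSphere n) ≤ ENNReal.ofReal A)
    (ε : ℝ) (hε : 0 ≤ ε) :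
    sphereProduct n N {θ | N * A + ε ≤ ∑ k, X (θ k)} ≤ ENNReal.ofReal (Real.exp (-(2 * ε^2 / N))) := by
  have hmean : ∫ θ, X θ ∂(uniformSphere n) ≤ A := by
    rw [integral_eq_lintegral_of_nonneg_ae (Filter.Eventually.of_forall fun θ => (h01 θ).1)
      hX.aestronglyMeasurable]
    exact ENNReal.toReal_le_of_le_ofReal hA0 hA
  set a := ∫ θ, X θ ∂(uniformSphere n) with ha
  unfold sphereProduct
  set P := Measure.pi fun _ : Fin N => uniformSphere n with hP
  have hind : ProbabilityTheory.iIndepFun (fun (k : Fin N) (θ : Fin N → sphere (0 : EuclideanSpace ℝ (Fin n)) 1) =>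
      X (θ k) - a) P :=
    ProbabilityTheory.iIndepFun_pi (X := fun _ θ => X θ - a) (fun i => (hX.sub_const a).aemeasurable)
  have hsub : ∀ k ∈ (Finset.univ : Finset (Fin N)), ProbabilityTheory.HasSubgaussianMGF
      (fun θ : Fin N → sphere (0 : EuclideanSpace ℝ (Fin n)) 1 => X (θ k) - a) ((‖(1:ℝ) - 0‖₊ / 2) ^ 2) P := by
    intro k _
    have h := ProbabilityTheory.hasSubgaussianMGF_of_mem_Icc (μ := P) (a := 0) (b := 1)
      (X := fun θ : Fin N → sphere (0 : EuclideanSpace ℝ (Fin n)) 1 => X (θ k))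
      (Measurable.aemeasurable (by fun_prop)) (Filter.Eventually.of_forall fun θ => h01 (θ k))
    have e : ∫ θ : Fin N → sphere (0 : EuclideanSpace ℝ (Fin n)) 1, X (θ k) ∂P = a := by
      have hmp := measurePreserving_eval (fun _ : Fin N => uniformSphere n) k
      rw [ha, ← hmp.map_eq, integral_map hmp.measurable.aemeasurable hX.aestronglyMeasurable]
    rw [e] at h
    exact h
  have hmain := ProbabilityTheory.HasSubgaussianMGF.measure_sum_ge_le_of_iIndepFun hind hsub hε
  have hNpos : (0:ℝ) < N := by exact_mod_cast hN
  calc P {θ | N * A + ε ≤ ∑ k, X (θ k)}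
      ≤ P {θ | ε ≤ ∑ k ∈ Finset.univ, (X (θ k) - a)} := by
        apply measure_mono
        intro θ hθ
        simp only [mem_ofPred_eq] at hθ ⊢
        rw [Finset.sum_sub_distrib]
        simp only [Finset.sum_const, Finset.card_univ, Fintype.card_fin, nsmul_eq_mul]
        nlinarith
    _ ≤ _ := by
        rw [← ofReal_measureReal]
        apply ENNReal.ofReal_le_ofReal
        refine hmain.trans (le_of_eq ?_)
        congr 1
        simp
        field_simp

lemma ke_chernoff {n N : ℕ} [NeZero n]
    (Y : sphere (0 : EuclideanSpace ℝ (Fin n)) 1 → ℝ) (hY : Measurable Y)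
    (hE : ∫⁻ θ, ENNReal.ofReal (Real.exp (Y θ)) ∂(uniformSphere n) ≤ ENNReal.ofReal 2) :
    sphereProduct n N {θ | 10 * N ≤ ∑ k, Y (θ k)} ≤ ENNReal.ofReal (Real.exp (-(9 * N))) := by
  unfold sphereProduct
  set P := Measure.pi fun _ : Fin N => uniformSphere n with hP
  have hind := ProbabilityTheory.iIndepFun_pi (μ := fun _ : Fin N => uniformSphere n)
    (X := fun _ θ => ENNReal.ofReal (Real.exp (Y θ))) (fun i => by fun_prop)
  have h1 : ∫⁻ θ, ∏ k, ENNReal.ofReal (Real.exp (Y (θ k))) ∂P ≤ ENNReal.ofReal 2 ^ N := by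
    have := ProbabilityTheory.lintegral_prod_eq_prod_lintegral_of_indepFun Finset.univ _ hind
      (fun i => by fun_prop)
    rw [this]
    calc _ ≤ ∏ _k : Fin N, ENNReal.ofReal 2 := by
          apply Finset.prod_le_prod'
          intro k _
          have hmp := measurePreserving_eval (fun _ : Fin N => uniformSphere n) k
          refine le_trans (le_of_eq ?_) hE
          exact hmp.lintegral_comp (f := fun θ => ENNReal.ofReal (Real.exp (Y θ))) (by fun_prop)
      _ = _ := by simp
  have hsub : {θ : Fin N → sphere (0 : EuclideanSpace ℝ (Fin n)) 1 | 10 * (N:ℝ) ≤ ∑ k, Y (θ k)} ⊆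
      {θ | ENNReal.ofReal (Real.exp (10 * N)) ≤ ∏ k, ENNReal.ofReal (Real.exp (Y (θ k)))} := by
    intro θ hθ
    simp only [mem_ofPred_eq] at hθ ⊢
    rw [← ENNReal.ofReal_prod_of_nonneg (fun i _ => (Real.exp_pos _).le), ← Real.exp_sum]
    gcongr
  refine (measure_mono hsub).trans ?_
  refine (meas_ge_le_lintegral_div (Measurable.aemeasurable (by fun_prop)) (by simp [Real.exp_pos]) (by simp)).trans ?_
  rw [← ENNReal.ofReal_pow (by norm_num)] at h1
  refine (ENNReal.div_le_div_right h1 _).trans ?_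
  rw [← ENNReal.ofReal_div_of_pos (Real.exp_pos _)]
  apply ENNReal.ofReal_le_ofReal
  rw [div_le_iff₀ (Real.exp_pos _), ← Real.exp_add]
  have h2 : (2:ℝ) ≤ Real.exp 1 := by linarith [Real.add_one_le_exp (1:ℝ)]
  calc (2:ℝ)^N ≤ (Real.exp 1)^N := by gcongr
    _ = _ := by rw [← Real.exp_nat_mul]; congr 1; ring

lemma ke_gphi_lip (a b : ℝ) : gphi a ≤ gphi b + |a - b| := by
  have h : ∀ x ∈ (univ : Set ℝ), HasDerivWithinAt gphi (-x * Real.exp (-x^2/2)) univ x := by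
    intro x _
    apply HasDerivAt.hasDerivWithinAt
    have h1 : HasDerivAt (fun x : ℝ => -x^2/2) (-x) x := by
      have := ((hasDerivAt_pow 2 x).neg).div_const 2
      have e : -x = -((2:ℕ) * x ^ (2-1)) / 2 := by simp; ring
      rw [e]
      exact this
    have h2 := h1.exp
    rw [mul_comm]
    exact h2
  have hb : ∀ x ∈ (univ : Set ℝ), ‖-x * Real.exp (-x^2/2)‖ ≤ 1 := by
    intro x _
    rw [norm_mul, norm_neg, Real.norm_eq_abs, Real.norm_eq_abs, abs_of_pos (Real.exp_pos _),
      neg_div, Real.exp_neg, ← div_eq_mul_inv, div_le_one (Real.exp_pos _)]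
    have := Real.add_one_le_exp (x^2/2)
    nlinarith [sq_nonneg (|x| - 1), sq_abs x]
  have := Convex.norm_image_sub_le_of_norm_hasDerivWithin_le h hb convex_univ (mem_univ b) (mem_univ a)
  rw [one_mul, Real.norm_eq_abs, Real.norm_eq_abs] at this
  linarith [le_abs_self (gphi a - gphi b)]

lemma ke_gphi_nonneg (a : ℝ) : 0 ≤ gphi a := (Real.exp_pos _).le

lemma ke_gphi_le_one (a : ℝ) : gphi a ≤ 1 := by
  unfold gphi
  apply Real.exp_le_one_iff.2
  nlinarith [sq_nonneg a]

lemma ke_op {n N : ℕ} (v : Fin N → EuclideanSpace ℝ (Fin n))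
    (S : Finset (EuclideanSpace ℝ (Fin n))) (δ : ℝ) (hδ : δ ≤ 1/4)
    (hcov : ∀ ξ : EuclideanSpace ℝ (Fin n), ‖ξ‖ = 1 → ∃ x ∈ S, ‖ξ - x‖ ≤ δ)
    (B : ℝ) (hB : 0 ≤ B) (hS : ∀ x ∈ S, ∑ k, ⟪x, v k⟫^2 ≤ B^2) (η : EuclideanSpace ℝ (Fin n)) :
    ∑ k, ⟪η, v k⟫^2 ≤ (2 * B * ‖η‖)^2 := by
  let A0 : EuclideanSpace ℝ (Fin n) →ₗ[ℝ] EuclideanSpace ℝ (Fin N) :=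
    { toFun := fun ξ => WithLp.toLp 2 (fun k => ⟪ξ, v k⟫)
      map_add' := by intro x y; ext k; simp [inner_add_left]
      map_smul' := by intro c x; ext k; simp [inner_smul_left] }
  let A := LinearMap.toContinuousLinearMap A0
  have hA : ∀ ξ, ‖A ξ‖^2 = ∑ k, ⟪ξ, v k⟫^2 := by
    intro ξ
    rw [EuclideanSpace.norm_sq_eq]
    simp [A, A0]
  have hAS : ∀ x ∈ S, ‖A x‖ ≤ B := by
    intro x hx
    have := hS x hx
    rw [← hA] at this
    exact (sq_le_sq₀ (norm_nonneg _) hB).1 this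
  have hn0 : 0 ≤ ‖A‖ := norm_nonneg _
  have h1 : ‖A‖ ≤ B + ‖A‖/2 := by
    apply ContinuousLinearMap.opNorm_le_of_unit_norm (by positivity)
    intro ξ hξ
    obtain ⟨x, hx, hd⟩ := hcov ξ hξ
    have e : A ξ = A x + A (ξ - x) := by rw [← map_add]; congr 1; abel
    rw [e]
    have h2 := norm_add_le (A x) (A (ξ - x))
    have h3 := A.le_opNorm (ξ - x)
    have h4 := hAS x hx
    have h5 : ‖A‖ * ‖ξ - x‖ ≤ ‖A‖ * (1/2) := by
      apply mul_le_mul_of_nonneg_left _ hn0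
      linarith
    linarith
  rw [← hA]
  have h6 := A.le_opNorm η
  have h7 : ‖A‖ * ‖η‖ ≤ 2 * B * ‖η‖ := by gcongr; linarith
  gcongr
  linarith

lemma ke_det {n N : ℕ} (hn : 5 ≤ n) (hnN : n ≤ N) (r : ℝ) (hr : 4 * Real.sqrt n ≤ r) (hrn : r ≤ n)
    (e : ℝ) (he0 : 0 ≤ e) (he : (n:ℝ) / N ≤ e) (q : ℝ) (hq0 : 0 ≤ q) (hq1 : q ≤ 1)
    (S : Finset (EuclideanSpace ℝ (Fin n)))
    (hcov : ∀ ξ : EuclideanSpace ℝ (Fin n), ‖ξ‖ = 1 → ∃ x ∈ S, ‖ξ - x‖ ≤ n * Real.sqrt n / (N * r))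
    (θ : Fin N → sphere (0 : EuclideanSpace ℝ (Fin n)) 1)
    (h1 : ∀ x ∈ S, ∑ k, ((n:ℝ) * ⟪x, (θ k : EuclideanSpace ℝ (Fin n))⟫^2/10) ≤ 10 * (N:ℝ))
    (h2 : ∀ x ∈ S, ∀ j : ℤ, j ∈ Finset.Icc (-(2*(N:ℤ)^2+1)) (2*(N:ℤ)^2+1) →
      ∑ k, gphi (r * ⟪x, (θ k : EuclideanSpace ℝ (Fin n))⟫ + (j:ℝ) / (N:ℝ)) ≤
        (N:ℝ) * (Real.sqrt n / r * gphi (q * Real.sqrt n * ((j:ℝ)/(N:ℝ)) / r)) + 5 * N * e)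
    (ξ : EuclideanSpace ℝ (Fin n)) (hξ : ‖ξ‖ = 1) (t : ℝ) :
    Ffun r t θ ξ ≤ 30 * e + (1 + 1 * Real.sqrt n / r) * (Real.sqrt n / r) *
                          gphi (q * Real.sqrt n * t / r) := by
  have hn' : (5:ℝ) ≤ n := by exact_mod_cast hn
  have hnN' : (n:ℝ) ≤ N := by exact_mod_cast hnN
  have hsn : 2 ≤ Real.sqrt n := Real.le_sqrt_of_sq_le (by linarith)
  have hsq : Real.sqrt n ^ 2 = n := Real.sq_sqrt (by linarith)
  have hr0 : 0 < r := by linarith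
  have hN0 : (0:ℝ) < N := by linarith
  have hg0 := ke_gphi_nonneg (q * Real.sqrt n * t / r)
  have hNe : 1 / (N:ℝ) ≤ e := by
    refine le_trans ?_ he
    gcongr
    linarith
  have hnθ : ∀ k, ‖(θ k : EuclideanSpace ℝ (Fin n))‖ = 1 := fun k => by simp
  have hP0 : 0 ≤ Real.sqrt n / r * gphi (q * Real.sqrt n * t / r) := by positivity
  have hP1 : Real.sqrt n / r * gphi (q * Real.sqrt n * t / r) ≤
      (1 + 1 * Real.sqrt n / r) * (Real.sqrt n / r) * gphi (q * Real.sqrt n * t / r) := by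
    rw [mul_assoc (1 + 1 * Real.sqrt n / r)]
    apply le_mul_of_one_le_left hP0
    have : 0 ≤ 1 * Real.sqrt n / r := by positivity
    linarith
  refine le_trans ?_ (add_le_add_right hP1 _)
  unfold Ffun
  rw [one_div, inv_mul_le_iff₀ hN0]
  rcases le_or_gt ((n:ℝ) + N) |t| with ht | ht
  · have hk : ∀ k ∈ (Finset.univ : Finset (Fin N)),
        gphi (r * ⟪ξ, (θ k : EuclideanSpace ℝ (Fin n))⟫ + t) ≤ 1 / (N:ℝ) := by
      intro k _
      have hi : |⟪ξ, (θ k : EuclideanSpace ℝ (Fin n))⟫| ≤ 1 := by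
        have := abs_real_inner_le_norm ξ (θ k : EuclideanSpace ℝ (Fin n))
        rwa [hξ, hnθ, one_mul] at this
      have habs : |(N:ℝ)| ≤ |r * ⟪ξ, (θ k : EuclideanSpace ℝ (Fin n))⟫ + t| := by
        rw [abs_of_pos hN0]
        have a1 := abs_sub_abs_le_abs_sub t (-(r * ⟪ξ, (θ k : EuclideanSpace ℝ (Fin n))⟫))
        rw [abs_neg, abs_mul, abs_of_pos hr0, sub_neg_eq_add, add_comm t] at a1
        have : r * |⟪ξ, (θ k : EuclideanSpace ℝ (Fin n))⟫| ≤ r * 1 := by gcongr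
        linarith
      refine (ke_gphi_abs_le habs).trans ?_
      unfold gphi
      rw [neg_div, Real.exp_neg, ← one_div]
      apply one_div_le_one_div_of_le hN0
      have := Real.add_one_le_exp ((N:ℝ)^2/2)
      nlinarith [sq_nonneg ((N:ℝ) - 1)]
    have hsum := Finset.sum_le_sum hk
    rw [Finset.sum_const, Finset.card_univ, Fintype.card_fin, nsmul_eq_mul] at hsum
    refine hsum.trans ?_
    gcongr
    linarith
  · obtain ⟨x, hxS, hxd⟩ := hcov ξ hξ
    set δ := (n:ℝ) * Real.sqrt n / (N * r) with hδ
    have hδ0 : 0 ≤ δ := by positivity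
    have hδ4 : δ ≤ 1/4 := by
      rw [hδ, div_le_div_iff₀ (by positivity) (by norm_num)]
      nlinarith
    set j : ℤ := ⌊t * N⌋ with hj
    have hj1 : (j:ℝ) ≤ t * N := Int.floor_le _
    have hj2 : t * N < j + 1 := Int.lt_floor_add_one _
    have habt := abs_lt.1 ht
    have hjmem : j ∈ Finset.Icc (-(2*(N:ℤ)^2+1)) (2*(N:ℤ)^2+1) := by
      rw [Finset.mem_Icc]
      have b1 : t * N ≤ 2 * (N:ℝ)^2 := by nlinarith
      have b2 : -(2 * (N:ℝ)^2) ≤ t * N := by nlinarith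
      constructor
      · have : -(2*(N:ℝ)^2+1) ≤ (j:ℝ) := by linarith
        exact_mod_cast this
      · have : (j:ℝ) ≤ 2*(N:ℝ)^2+1 := by linarith
        exact_mod_cast this
    have htj : |t - j/N| ≤ 1 / (N:ℝ) := by
      have : t - j/N = (t * N - j)/N := by field_simp
      rw [this, abs_div, abs_of_pos hN0, abs_of_nonneg (by linarith)]
      gcongr
      linarith
    have hop := ke_op (fun k => (θ k : EuclideanSpace ℝ (Fin n))) S δ hδ4 hcov
      (10 * Real.sqrt (N/n)) (by positivity) (by
        intro x hx
        have h := h1 x hx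
        rw [← Finset.sum_div, ← Finset.mul_sum, div_le_iff₀ (by norm_num)] at h
        rw [mul_pow, Real.sq_sqrt (by positivity), ← mul_div_assoc, le_div_iff₀ (by linarith)]
        linarith) (ξ - x)
    have hl1 : ∑ k, |⟪ξ - x, (θ k : EuclideanSpace ℝ (Fin n))⟫| ≤ 20 * N * δ / Real.sqrt n := by
      have hc := sq_sum_le_card_mul_sum_sq (s := (Finset.univ : Finset (Fin N)))
        (f := fun k => |⟪ξ - x, (θ k : EuclideanSpace ℝ (Fin n))⟫|)
      simp only [sq_abs, Finset.card_univ, Fintype.card_fin] at hc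
      refine (sq_le_sq₀ (Finset.sum_nonneg fun _ _ => abs_nonneg _) (by positivity)).1 ?_
      refine hc.trans ?_
      have hs1 : Real.sqrt (N/n) ^ 2 = N / n := Real.sq_sqrt (by positivity)
      calc _ ≤ (N:ℝ) * (2 * (10 * Real.sqrt (N/n)) * ‖ξ - x‖)^2 := by gcongr
        _ ≤ (N:ℝ) * (2 * (10 * Real.sqrt (N/n)) * δ)^2 := by gcongr
        _ = _ := by
          have e1 : (20 * N * δ / Real.sqrt n)^2 = 400 * N^2 * δ^2 / n := by
            rw [div_pow (20 * N * δ), hsq]; ring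
          have e2 : (N:ℝ) * (2 * (10 * Real.sqrt (N/n)) * δ)^2 =
              N * 400 * (Real.sqrt (N/n))^2 * δ^2 := by ring
          rw [e1, e2, hs1]; ring
    have hl2 : r * (20 * N * δ / Real.sqrt n) = 20 * n := by
      rw [hδ]; field_simp
    have hterm : ∀ k ∈ (Finset.univ : Finset (Fin N)),
        gphi (r * ⟪ξ, (θ k : EuclideanSpace ℝ (Fin n))⟫ + t) ≤
        gphi (r * ⟪x, (θ k : EuclideanSpace ℝ (Fin n))⟫ + j/N) +
          (r * |⟪ξ - x, (θ k : EuclideanSpace ℝ (Fin n))⟫| + 1 / N) := by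
      intro k _
      refine (ke_gphi_lip _ (r * ⟪x, (θ k : EuclideanSpace ℝ (Fin n))⟫ + j/N)).trans ?_
      gcongr
      have e1 : r * ⟪ξ, (θ k : EuclideanSpace ℝ (Fin n))⟫ + t -
          (r * ⟪x, (θ k : EuclideanSpace ℝ (Fin n))⟫ + j/N) =
          r * ⟪ξ - x, (θ k : EuclideanSpace ℝ (Fin n))⟫ + (t - j/N) := by
        rw [inner_sub_left]; ring
      rw [e1]
      refine (abs_add_le _ _).trans ?_
      rw [abs_mul, abs_of_pos hr0]
      linarith
    have hsum := Finset.sum_le_sum hterm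
    rw [Finset.sum_add_distrib, Finset.sum_add_distrib, ← Finset.mul_sum, Finset.sum_const,
      Finset.card_univ, Fintype.card_fin, nsmul_eq_mul, mul_one_div_cancel hN0.ne'] at hsum
    have hh2 := h2 x hxS j hjmem
    have hrl := mul_le_mul_of_nonneg_left hl1 hr0.le
    rw [hl2] at hrl
    have hsr : Real.sqrt n / r ≤ 1 := by rw [div_le_one hr0]; linarith
    have hsr0 : 0 ≤ Real.sqrt n / r := by positivity
    have hA : Real.sqrt n / r * gphi (q * Real.sqrt n * (j/N) / r) ≤
        Real.sqrt n / r * gphi (q * Real.sqrt n * t / r) + 1 / N := by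
      have g1 := ke_gphi_lip (q * Real.sqrt n * (j/N) / r) (q * Real.sqrt n * t / r)
      have g2 : |q * Real.sqrt n * (j/N) / r - q * Real.sqrt n * t / r| ≤ 1 / N := by
        have : q * Real.sqrt n * (j/N) / r - q * Real.sqrt n * t / r =
          -((q * (Real.sqrt n / r)) * (t - j/N)) := by ring
        rw [this, abs_neg, abs_mul, abs_of_nonneg (by positivity)]
        have : q * (Real.sqrt n / r) ≤ 1 := mul_le_one₀ hq1 hsr0 hsr
        calc _ ≤ 1 * (1/(N:ℝ)) := by gcongr
          _ = _ := one_mul _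
      have g3 : Real.sqrt n / r * gphi (q * Real.sqrt n * (j/N) / r) ≤
        Real.sqrt n / r * (gphi (q * Real.sqrt n * t / r) + 1/N) := by
        gcongr; linarith
      have g4 : Real.sqrt n / r * (1/N) ≤ 1 * (1/(N:ℝ)) := by gcongr
      linarith
    have hNA := mul_le_mul_of_nonneg_left hA hN0.le
    rw [mul_add (N:ℝ), mul_one_div_cancel hN0.ne'] at hNA
    have hnNe : (n:ℝ) ≤ N * e := by
      rw [div_le_iff₀ hN0] at he; linarith
    rw [mul_add (N:ℝ)]
    nlinarith

lemma ke_Jcard (n N : ℕ) (L : ℝ) (hn' : (5:ℝ) ≤ n) (hnN' : (n:ℝ) ≤ N) (hN10 : (N : ℝ) ≤ (n : ℝ) ^ 10)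
    (hL1 : 1 ≤ L) : ((Finset.Icc (-(2*(N:ℤ)^2+1)) (2*(N:ℤ)^2+1)).card : ℝ) ≤
      Real.exp (23 * (n * L)) := by
  set J := Finset.Icc (-(2*(N:ℤ)^2+1)) (2*(N:ℤ)^2+1) with hJ
  have h1 : (J.card : ℝ) = 4 * (N:ℝ)^2 + 3 := by
    have : J.card = 4 * N^2 + 3 := by
      rw [hJ, Int.card_Icc]
      have : (2*(N:ℤ)^2+1) + 1 - -(2*(N:ℤ)^2+1) = ((4 * N^2 + 3 : ℕ) : ℤ) := by push_cast; ring
      rw [this]; exact Int.toNat_natCast _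
    rw [this]; push_cast; ring
  have h2 : (N:ℝ)^2 ≤ Real.exp (20 * n) := by
    calc (N:ℝ)^2 ≤ ((n:ℝ)^10)^2 := by gcongr
      _ = (n:ℝ)^20 := by ring
      _ ≤ (Real.exp n)^20 := by
        gcongr
        linarith [Real.add_one_le_exp (n:ℝ)]
      _ = _ := by rw [← Real.exp_nat_mul]; norm_num
  have h3 : (7:ℝ) ≤ Real.exp 3 := by
    have : Real.exp 3 = Real.exp 1 ^ 3 := by rw [← Real.exp_nat_mul]; norm_num
    rw [this]
    have h27 : (2:ℝ) ≤ Real.exp 1 := by linarith [Real.add_one_le_exp (1:ℝ)]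
    calc (7:ℝ) ≤ 2^3 := by norm_num
      _ ≤ _ := by gcongr
  have hN1 : (1:ℝ) ≤ (N:ℝ)^2 := by nlinarith
  calc (J.card : ℝ) ≤ 7 * (N:ℝ)^2 := by rw [h1]; linarith
    _ ≤ Real.exp 3 * Real.exp (20 * n) := by gcongr
    _ = Real.exp (3 + 20 * n) := by rw [Real.exp_add]
    _ ≤ _ := by
      gcongr
      nlinarith

lemma ke_fin (n N : ℕ) (L s j : ℝ) (hn' : (5:ℝ) ≤ n) (hL1 : 1 ≤ L) (hNL : n * L ≤ N)
    (hj0 : 0 ≤ j)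
    (hs : s ≤ Real.exp (3 * (n * L))) (hj : j ≤ Real.exp (23 * (n * L))) :
    s * (Real.exp (-(9 * N)) + j * Real.exp (-(50 * (n * L)))) ≤ Real.exp (-(5 * n)) := by
  have hnL : (n:ℝ) ≤ n * L := by nlinarith
  calc s * (Real.exp (-(9 * N)) + j * Real.exp (-(50 * (n * L))))
      ≤ Real.exp (3 * (n * L)) * (Real.exp (-(9 * (n * L))) +
        Real.exp (23 * (n * L)) * Real.exp (-(50 * (n * L)))) := by
        gcongr
    _ = Real.exp (-(6 * (n * L))) + Real.exp (-(24 * (n * L))) := by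
        rw [mul_add, ← Real.exp_add, ← Real.exp_add, ← Real.exp_add]
        congr 2 <;> ring
    _ ≤ Real.exp (-(6 * n)) + Real.exp (-(6 * n)) := by
        gcongr <;> nlinarith
    _ ≤ Real.exp 1 * Real.exp (-(6 * n)) := by
        have h2 : (2:ℝ) ≤ Real.exp 1 := by linarith [Real.add_one_le_exp (1:ℝ)]
        nlinarith [Real.exp_pos (-(6 * (n:ℝ)))]
    _ ≤ _ := by
        rw [← Real.exp_add]
        gcongr
        linarith

lemma ke_ar (n N : ℕ) (L e : ℝ) (hN0 : (0:ℝ) < N) (he2 : e^2 = n * L / N) :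
    -(2 * (5 * N * e)^2 / N) = -(50 * (n * L)) := by
  rw [mul_pow, he2]
  field_simp
  ring

lemma ke_b1 {n N : ℕ} [NeZero n] (hn : 5 ≤ n) (x : EuclideanSpace ℝ (Fin n)) (hx : ‖x‖ = 1) :
    sphereProduct n N {θ | 10 * (N:ℝ) ≤
      ∑ k, ((n:ℝ) * ⟪x, (θ k : EuclideanSpace ℝ (Fin n))⟫^2/10)} ≤
      ENNReal.ofReal (Real.exp (-(9 * N))) := by
  have hm : Measurable (fun θ : sphere (0 : EuclideanSpace ℝ (Fin n)) 1 =>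
      (n:ℝ) * ⟪x, (θ : EuclideanSpace ℝ (Fin n))⟫^2/10) := by
    apply Continuous.measurable
    fun_prop
  have hE := ke_exp_sq hn x hx
  have h := ke_chernoff (N := N) _ hm hE
  exact h

lemma ke_b2 {n N : ℕ} [NeZero n] (hn : 5 ≤ n) (hN : 0 < N) (x : EuclideanSpace ℝ (Fin n))
    (hx : ‖x‖ = 1) (r t : ℝ) (hr : 4 * Real.sqrt n ≤ r) (hrn : r ≤ n)
    (L e : ℝ) (he0 : 0 ≤ e) (he2 : e^2 = n * L / N) :
    sphereProduct n N {θ | (N:ℝ) * (Real.sqrt n / r *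
        gphi ((1 - 4 * Real.sqrt n / r) * Real.sqrt n * t / r)) + 5 * N * e ≤
        ∑ k, gphi (r * ⟪x, (θ k : EuclideanSpace ℝ (Fin n))⟫ + t)} ≤
      ENNReal.ofReal (Real.exp (-(50 * (n * L)))) := by
  have hN0 : (0:ℝ) < N := by exact_mod_cast hN
  have hm : Measurable (fun θ : sphere (0 : EuclideanSpace ℝ (Fin n)) 1 =>
      gphi (r * ⟪x, (θ : EuclideanSpace ℝ (Fin n))⟫ + t)) := by
    apply Continuous.measurable
    unfold gphi
    fun_prop
  have hr0 : 0 ≤ r := le_trans (by positivity) hr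
  have hE := ke_mean hn x hx r t hr hrn
  have h := ke_hoeffding hN _ hm (fun θ => ⟨ke_gphi_nonneg _, ke_gphi_le_one _⟩) _
    (mul_nonneg (by positivity) (ke_gphi_nonneg _)) hE (5 * N * e) (by positivity)
  rw [ke_ar n N L e hN0 he2] at h
  exact h

/-- the key estimate (Proposition 3.1): with probability at least
`1 − e^{−5n}`, simultaneously for all unit `ξ` and all `t`,
`(1/N)∑ φ(r⟨ξ,θ_k⟩+t) ≤ C₃√(n log(Nr/(n√n))/N) + (1+C₄√n/r)(√n/r)φ(q√n t/r)`. -/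
theorem key_estimate :
    ∃ C₁ C₂ C₃ C₄ C₅ : ℝ, 0 < C₁ ∧ 0 < C₂ ∧ 0 < C₃ ∧ 0 < C₄ ∧ 0 < C₅ ∧
      ∀ n N : ℕ, 5 ≤ n → n ≤ N →
        ∀ r : ℝ, C₂ * Real.sqrt n ≤ r → r ≤ n →
          C₁ * n * Real.log (N * r / (n * Real.sqrt n)) ≤ N → (N : ℝ) ≤ (n : ℝ) ^ 10 →
            ∃ q : ℝ, 1 - C₅ * Real.sqrt n / r ≤ q ∧
              ENNReal.ofReal (1 - Real.exp (-(5 * n))) ≤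
                sphereProduct n N
                  {θ | ∀ ξ : EuclideanSpace ℝ (Fin n), ‖ξ‖ = 1 → ∀ t : ℝ,
                    Ffun r t θ ξ ≤
                      C₃ * Real.sqrt (n * Real.log (N * r / (n * Real.sqrt n)) / N) +
                        (1 + C₄ * Real.sqrt n / r) * (Real.sqrt n / r) *
                          gphi (q * Real.sqrt n * t / r)} := by

  refine ⟨1, 4, 30, 1, 4, by norm_num, by norm_num, by norm_num, by norm_num, by norm_num, ?_⟩
  intro n N hn hnN r hr hrn hNL hN10
  have hn' : (5:ℝ) ≤ n := by exact_mod_cast hn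
  have hnN' : (n:ℝ) ≤ N := by exact_mod_cast hnN
  have hsn : 2 ≤ Real.sqrt n := Real.le_sqrt_of_sq_le (by linarith)
  have hsq : Real.sqrt n ^ 2 = n := Real.sq_sqrt (by linarith)
  have hr0 : 0 < r := by linarith
  have hN0 : (0:ℝ) < N := by linarith
  have : NeZero n := ⟨by omega⟩
  set L := Real.log (N * r / (n * Real.sqrt n)) with hL
  have hratio : 4 ≤ N * r / (n * Real.sqrt n) := by
    rw [le_div_iff₀ (by positivity)]
    calc 4 * (n * Real.sqrt n) = n * (4 * Real.sqrt n) := by ring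
      _ ≤ N * r := by gcongr
  have hexpL : Real.exp L = N * r / (n * Real.sqrt n) := Real.exp_log (by linarith)
  have hL1 : 1 ≤ L := by
    rw [hL, Real.le_log_iff_exp_le (by linarith)]
    linarith [Real.exp_one_lt_d9]
  set e := Real.sqrt (n * L / N) with he
  have he2 : e^2 = n * L / N := Real.sq_sqrt (by positivity)
  have he0 : 0 ≤ e := Real.sqrt_nonneg _
  have hne : (n:ℝ) / N ≤ e := by
    apply Real.le_sqrt_of_sq_le
    have h1 : (n:ℝ)/N ≤ 1 := by rw [div_le_one hN0]; exact hnN'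
    have h0 : 0 ≤ (n:ℝ)/N := by positivity
    calc ((n:ℝ)/N)^2 ≤ (n:ℝ)/N := by nlinarith
      _ ≤ n * L / N := by gcongr; nlinarith
  have hq1 : 4 * Real.sqrt n / r ≤ 1 := by rw [div_le_one hr0]; exact hr
  have hq2 : 0 ≤ 4 * Real.sqrt n / r := by positivity
  set q := 1 - 4 * Real.sqrt n / r with hq
  refine ⟨q, le_rfl, ?_⟩
  have hδ0 : 0 < n * Real.sqrt n / (N * r) := by positivity
  have hδe : n * Real.sqrt n / (N * r) = (Real.exp L)⁻¹ := by rw [hexpL, inv_div]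
  have hδ1 : n * Real.sqrt n / (N * r) ≤ 1 := by
    rw [hδe, hexpL]
    exact inv_le_one_of_one_le₀ (by linarith)
  obtain ⟨S, hS1, hcov, hcard⟩ := ke_net (n := n) (by omega) _ hδ0 hδ1
  set J := Finset.Icc (-(2*(N:ℤ)^2+1)) (2*(N:ℤ)^2+1) with hJ
  set B1 : EuclideanSpace ℝ (Fin n) → Set (Fin N → sphere (0 : EuclideanSpace ℝ (Fin n)) 1) :=
    fun x => {θ | 10 * (N:ℝ) ≤ ∑ k, ((n:ℝ) * ⟪x, (θ k : EuclideanSpace ℝ (Fin n))⟫^2/10)} with hB1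
  set B2 : EuclideanSpace ℝ (Fin n) → ℤ → Set (Fin N → sphere (0 : EuclideanSpace ℝ (Fin n)) 1) :=
    fun x j => {θ | (N:ℝ) * (Real.sqrt n / r * gphi (q * Real.sqrt n * ((j:ℝ)/(N:ℝ)) / r)) +
      5 * N * e ≤ ∑ k, gphi (r * ⟪x, (θ k : EuclideanSpace ℝ (Fin n))⟫ + (j:ℝ) / (N:ℝ))} with hB2
  have hb1 : ∀ x ∈ S, sphereProduct n N (B1 x) ≤ ENNReal.ofReal (Real.exp (-(9 * N))) := by
    intro x hx
    exact ke_b1 hn x (hS1 x hx)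
  have hb2 : ∀ x ∈ S, ∀ j, sphereProduct n N (B2 x j) ≤ ENNReal.ofReal (Real.exp (-(50 * (n * L)))) := by
    intro x hx j
    exact ke_b2 hn (by omega) x (hS1 x hx) r _ hr hrn L e he0 he2
  set G : Set (Fin N → sphere (0 : EuclideanSpace ℝ (Fin n)) 1) :=
    {θ | ∀ ξ : EuclideanSpace ℝ (Fin n), ‖ξ‖ = 1 → ∀ t : ℝ,
                    Ffun r t θ ξ ≤ 30 * e + (1 + 1 * Real.sqrt n / r) * (Real.sqrt n / r) *
                          gphi (q * Real.sqrt n * t / r)} with hG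
  have hGc : Gᶜ ⊆ ⋃ x ∈ S, (B1 x ∪ ⋃ j ∈ J, B2 x j) := by
    intro θ hθ
    by_contra hnot
    apply hθ
    simp only [mem_iUnion, mem_union, not_exists, not_or] at hnot
    intro ξ hξ t
    refine ke_det hn hnN r hr hrn e he0 hne q (by linarith) (by linarith) S hcov θ ?_ ?_ ξ hξ t
    · intro x hx
      exact (not_le.1 (hnot x hx).1).le
    · intro x hx j hj
      exact (not_le.1 ((hnot x hx).2 j hj)).le
  have hJcard : (J.card : ℝ) ≤ Real.exp (23 * (n * L)) := ke_Jcard n N L hn' hnN' hN10 hL1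
  have hScard : (S.card : ℝ) ≤ Real.exp (3 * (n * L)) := by
    refine hcard.trans ?_
    rw [hδe, div_inv_eq_mul]
    have h3 : (3:ℝ) ≤ Real.exp 2 := by linarith [Real.add_one_le_exp (2:ℝ)]
    calc (3 * Real.exp L)^n ≤ (Real.exp 2 * Real.exp L)^n := by gcongr
      _ = Real.exp (n * (2 + L)) := by rw [← Real.exp_add, ← Real.exp_nat_mul]
      _ ≤ _ := by
        apply Real.exp_le_exp.2
        nlinarith
  have hGm : sphereProduct n N Gᶜ ≤ ENNReal.ofReal (Real.exp (-(5 * n))) := by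
    calc sphereProduct n N Gᶜ ≤ sphereProduct n N (⋃ x ∈ S, (B1 x ∪ ⋃ j ∈ J, B2 x j)) :=
          measure_mono hGc
      _ ≤ ∑ x ∈ S, sphereProduct n N (B1 x ∪ ⋃ j ∈ J, B2 x j) := measure_biUnion_finset_le _ _
      _ ≤ ∑ _x ∈ S, (ENNReal.ofReal (Real.exp (-(9 * N))) +
          ∑ _j ∈ J, ENNReal.ofReal (Real.exp (-(50 * (n * L))))) := by
          apply Finset.sum_le_sum
          intro x hx
          refine (measure_union_le _ _).trans (add_le_add (hb1 x hx) ?_)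
          refine (measure_biUnion_finset_le _ _).trans (Finset.sum_le_sum fun j _ => hb2 x hx j)
      _ = ENNReal.ofReal (S.card * (Real.exp (-(9 * N)) + J.card * Real.exp (-(50 * (n * L))))) := by
          rw [Finset.sum_const, Finset.sum_const, nsmul_eq_mul, nsmul_eq_mul,
            ENNReal.ofReal_mul (by positivity), ENNReal.ofReal_add (by positivity) (by positivity),
            ENNReal.ofReal_mul (by positivity), ENNReal.ofReal_natCast, ENNReal.ofReal_natCast]
      _ ≤ _ := by
          apply ENNReal.ofReal_le_ofReal
          exact ke_fin n N L _ _ hn' hL1 (by linarith) (Nat.cast_nonneg _) hScard hJcard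
  have : IsProbabilityMeasure (sphereProduct n N) := by unfold sphereProduct; infer_instance
  have hone : 1 ≤ sphereProduct n N G + sphereProduct n N Gᶜ := by
    rw [← measure_univ (μ := sphereProduct n N), ← union_compl_self G]
    exact measure_union_le _ _
  rw [ENNReal.ofReal_sub _ (Real.exp_pos _).le, ENNReal.ofReal_one]
  refine tsub_le_iff_right.2 (hone.trans ?_)
  gcongr
end

section
/- There is a universal constant c > 0 with the following property. Let n ≥ 2 and let v₁, …, v_M ∈ ℝⁿ be vectors with 0 < |v_i| ≤ n for all i. Let K = conv{±v₁, …, ±v_M, ±n e₁, …, ±n e_n}, where e₁, …, e_n is the standard basis of ℝⁿ. Then |4K| ≤ cⁿ · Π_{i=1}^{M} (1 − e^{−25 n²/(2 |v_i|²)})^{−1}. -/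
open MeasureTheory Metric Set
open scoped Pointwise

/-- One-coordinate rounding. -/
lemma round_coord {E : Type*} [NormedAddCommGroup E] [InnerProductSpace ℝ E]
    (w z : E) (t c x : ℝ) (hx : 0 ≤ x) :
    ∃ k : ℕ, ‖z + (t * (x - k)) • w‖ ^ 2 + c * k ≤
      ‖z‖ ^ 2 + (t ^ 2 * ‖w‖ ^ 2 + c) * x := by
  by_contra! h
  have h0 := h ⌊x⌋₊
  have h1 := h (⌊x⌋₊ + 1)
  have a0 : ∀ a : ℝ, ‖z + a • w‖ ^ 2 = ‖z‖ ^ 2 + 2 * a * inner ℝ z w + a ^ 2 * ‖w‖ ^ 2 := by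
    intro a
    rw [norm_add_sq_real, inner_smul_right, norm_smul, mul_pow, Real.norm_eq_abs, sq_abs]
    ring
  rw [a0] at h0 h1
  have hk0 : (⌊x⌋₊ : ℝ) ≤ x := Nat.floor_le hx
  have hk1 : x < ⌊x⌋₊ + 1 := Nat.lt_floor_add_one x
  have hkn : (0 : ℝ) ≤ ⌊x⌋₊ := Nat.cast_nonneg _
  push_cast at h1
  generalize (⌊x⌋₊ : ℝ) = k at *
  obtain ⟨θ, rfl⟩ : ∃ θ, x = k + θ := ⟨x - k, by ring⟩
  have e0 : k + θ - k = θ := by ring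
  have e1 : k + θ - (k + 1) = θ - 1 := by ring
  rw [e0] at h0
  rw [e1] at h1
  have hθ : 0 ≤ θ := by linarith
  have hθ1 : 0 < 1 - θ := by linarith
  have m0 := mul_lt_mul_of_pos_left h0 hθ1
  have m1 := mul_le_mul_of_nonneg_left h1.le hθ
  have hq : 0 ≤ t ^ 2 * ‖w‖ ^ 2 * (k + θ ^ 2) := by positivity
  nlinarith

lemma round_coords {E ι : Type*} [NormedAddCommGroup E] [InnerProductSpace ℝ E]
    (w : ι → E) (t c x : ι → ℝ) (hx : ∀ i, 0 ≤ x i) (s : Finset ι) :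
    ∀ z : E, ∃ N : ι → ℕ, ‖z + ∑ i ∈ s, (t i * (x i - N i)) • w i‖ ^ 2 + ∑ i ∈ s, c i * N i ≤
      ‖z‖ ^ 2 + ∑ i ∈ s, (t i ^ 2 * ‖w i‖ ^ 2 + c i) * x i := by
  classical
  induction s using Finset.induction_on with
  | empty => intro z; exact ⟨0, by simp⟩
  | insert a s ha ih =>
    intro z
    obtain ⟨k, hk⟩ := round_coord (w a) z (t a) (c a) (x a) (hx a)
    obtain ⟨N, hN⟩ := ih (z + (t a * (x a - k)) • w a)
    refine ⟨Function.update N a k, ?_⟩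
    rw [Finset.sum_insert ha, Finset.sum_insert ha, Finset.sum_insert ha]
    have e1 : ∑ i ∈ s, (t i * (x i - (Function.update N a k i : ℕ))) • w i
        = ∑ i ∈ s, (t i * (x i - N i)) • w i := by
      refine Finset.sum_congr rfl fun i hi => ?_
      rw [Function.update_of_ne (ne_of_mem_of_not_mem hi ha)]
    have e2 : ∑ i ∈ s, c i * (Function.update N a k i : ℕ) = ∑ i ∈ s, c i * N i := by
      refine Finset.sum_congr rfl fun i hi => ?_
      rw [Function.update_of_ne (ne_of_mem_of_not_mem hi ha)]
    rw [e1, e2, Function.update_self, ← add_assoc z]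
    linarith

lemma mem_hull_range {E ι : Type*} [AddCommGroup E] [Module ℝ E] [Fintype ι]
    (w : ι → E) (y : E) (hy : y ∈ convexHull ℝ (range w)) :
    ∃ l : ι → ℝ, (∀ i, 0 ≤ l i) ∧ ∑ i, l i = 1 ∧ ∑ i, l i • w i = y := by
  classical
  let f : (ι → ℝ) →ₗ[ℝ] E := Fintype.linearCombination ℝ w
  have hsub : convexHull ℝ (range w) ⊆ f '' stdSimplex ℝ ι := by
    refine convexHull_min ?_ ((convex_stdSimplex ℝ ι).linear_image f)
    rintro _ ⟨i, rfl⟩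
    refine ⟨Pi.single i 1, single_mem_stdSimplex ℝ i, ?_⟩
    simp [f, Fintype.linearCombination_apply_single]
  obtain ⟨l, hl, rfl⟩ := hsub hy
  exact ⟨l, hl.1, hl.2, by simp [f, Fintype.linearCombination_apply]⟩

lemma lintegral_gauss (n : ℕ) (z : EuclideanSpace ℝ (Fin n)) :
    ∫⁻ y : EuclideanSpace ℝ (Fin n), ENNReal.ofReal (Real.exp (-‖y - z‖ ^ 2)) =
      ENNReal.ofReal (Real.pi ^ ((n : ℝ) / 2)) := by
  rw [lintegral_sub_right_eq_self (fun y : EuclideanSpace ℝ (Fin n) =>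
    ENNReal.ofReal (Real.exp (-‖y‖ ^ 2))) z]
  have h := GaussianFourier.integral_rexp_neg_mul_sq_norm
    (V := EuclideanSpace ℝ (Fin n)) (b := 1) one_pos
  simp only [neg_mul, one_mul, div_one, finrank_euclideanSpace, Fintype.card_fin] at h
  have hpos : (0 : ℝ) < Real.pi ^ ((n : ℝ) / 2) := Real.rpow_pos_of_pos Real.pi_pos _
  rw [← h, ofReal_integral_eq_lintegral_ofReal]
  · exact Integrable.of_integral_ne_zero (by rw [h]; exact hpos.ne')
  · exact Filter.Eventually.of_forall fun y => (Real.exp_pos _).le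

lemma general_bound {ι : Type*} [Fintype ι] (n : ℕ) (hn : 2 ≤ n)
    (w : ι → EuclideanSpace ℝ (Fin n)) (hw : ∀ i, w i ≠ 0) (hwn : ∀ i, ‖w i‖ ≤ n) :
    volume ((4 : ℝ) • convexHull ℝ (range w)) ≤
      ENNReal.ofReal (Real.exp (104 * n) * Real.pi ^ ((n : ℝ) / 2) *
        ∏ i, (1 - Real.exp (-(25 * n ^ 2 / ‖w i‖ ^ 2)))⁻¹) := by
  classical
  have hn0 : (0 : ℝ) < n := by exact_mod_cast (by omega : 0 < n)
  have hwp : ∀ i, 0 < ‖w i‖ := fun i => norm_pos_iff.2 (hw i)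
  set c : ι → ℝ := fun i => 25 * n ^ 2 / ‖w i‖ ^ 2 with hc
  set t : ι → ℝ := fun i => n / ‖w i‖ ^ 2 with ht
  have hc1 : ∀ i, 1 ≤ c i := by
    intro i
    rw [hc]
    simp only
    rw [le_div_iff₀ (by have := hwp i; positivity)]
    nlinarith [hwp i, hwn i]
  set L : ℕ := 104 * n + 1 with hL
  set P : Finset (ι → ℕ) := Fintype.piFinset fun _ => Finset.range L with hP
  set ctr : (ι → ℕ) → EuclideanSpace ℝ (Fin n) := fun N => ∑ i, (t i * N i) • w i with hctr
  set F : (ι → ℕ) → EuclideanSpace ℝ (Fin n) → ENNReal := fun N y =>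
    ENNReal.ofReal (Real.exp (104 * n) * ∏ i, Real.exp (-c i) ^ N i) *
      ENNReal.ofReal (Real.exp (-‖y - ctr N‖ ^ 2)) with hF
  -- pointwise bound
  have key : ∀ y ∈ (4 : ℝ) • convexHull ℝ (range w), 1 ≤ ∑ N ∈ P, F N y := by
    rintro _ ⟨y, hy, rfl⟩
    obtain ⟨l, hl0, hl1, rfl⟩ := mem_hull_range w y hy
    obtain ⟨N, hN⟩ := round_coords w t c (fun i => 4 * l i * ‖w i‖ ^ 2 / n)
      (fun i => by have := hl0 i; positivity) Finset.univ 0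
    have e1 : (0 : EuclideanSpace ℝ (Fin n)) +
        ∑ i, (t i * (4 * l i * ‖w i‖ ^ 2 / n - N i)) • w i =
        (4 : ℝ) • (∑ i, l i • w i) - ctr N := by
      rw [zero_add, hctr, Finset.smul_sum, ← Finset.sum_sub_distrib]
      refine Finset.sum_congr rfl fun i _ => ?_
      rw [smul_smul, ← sub_smul]
      congr 1
      have := (hwp i).ne'
      simp only [ht]
      field_simp
    have e2 : ∑ i, (t i ^ 2 * ‖w i‖ ^ 2 + c i) * (4 * l i * ‖w i‖ ^ 2 / n) =
        (104 * n : ℝ) := by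
      have : ∀ i, (t i ^ 2 * ‖w i‖ ^ 2 + c i) * (4 * l i * ‖w i‖ ^ 2 / n) = 104 * n * l i := by
        intro i
        have := (hwp i).ne'
        simp only [ht, hc]
        field_simp
        ring
      rw [Finset.sum_congr rfl fun i _ => this i, ← Finset.mul_sum, hl1, mul_one]
    rw [e1, e2] at hN
    simp only [norm_zero, ne_eq, OfNat.ofNat_ne_zero, not_false_eq_true, zero_pow, zero_add] at hN
    have hcN : ∀ i ∈ Finset.univ, 0 ≤ c i * (N i : ℝ) := fun i _ =>
      mul_nonneg (by linarith [hc1 i]) (Nat.cast_nonneg _)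
    have hNP : N ∈ P := by
      rw [hP, Fintype.mem_piFinset]
      intro i
      rw [Finset.mem_range]
      have h1 := Finset.single_le_sum hcN (Finset.mem_univ i)
      have h2 : (N i : ℝ) ≤ c i * N i := le_mul_of_one_le_left (Nat.cast_nonneg _) (hc1 i)
      have h3 : (N i : ℝ) ≤ 104 * n := by
        have := sq_nonneg ‖(4 : ℝ) • (∑ i, l i • w i) - ctr N‖
        linarith
      have h4 : N i ≤ 104 * n := by exact_mod_cast h3
      omega
    refine le_trans ?_ (Finset.single_le_sum (f := fun N => F N _) (fun _ _ => zero_le) hNP)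
    simp only [hF]
    rw [← ENNReal.ofReal_mul (by positivity), ENNReal.one_le_ofReal]
    have e3 : ∏ i, Real.exp (-c i) ^ N i = Real.exp (-∑ i, c i * N i) := by
      rw [← Finset.sum_neg_distrib, Real.exp_sum]
      refine Finset.prod_congr rfl fun i _ => ?_
      rw [← Real.exp_nat_mul]
      congr 1
      ring
    rw [e3, ← Real.exp_add, ← Real.exp_add]
    apply Real.one_le_exp
    linarith
  have hmeas : ∀ N, Measurable (F N) := by
    intro N
    simp only [hF]
    fun_prop
  calc volume ((4 : ℝ) • convexHull ℝ (range w))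
      = ∫⁻ y in (4 : ℝ) • convexHull ℝ (range w), 1 := by simp
    _ ≤ ∫⁻ y in (4 : ℝ) • convexHull ℝ (range w), ∑ N ∈ P, F N y :=
        setLIntegral_mono (Finset.measurable_fun_sum _ fun N _ => hmeas N) key
    _ ≤ ∫⁻ y, ∑ N ∈ P, F N y := setLIntegral_le_lintegral _ _
    _ = ∑ N ∈ P, ∫⁻ y, F N y := lintegral_finsetSum _ fun N _ => hmeas N
    _ = ∑ N ∈ P, ENNReal.ofReal (Real.exp (104 * n) * ∏ i, Real.exp (-c i) ^ N i) *
          ENNReal.ofReal (Real.pi ^ ((n : ℝ) / 2)) := by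
        refine Finset.sum_congr rfl fun N _ => ?_
        simp only [hF]
        rw [lintegral_const_mul' _ _ ENNReal.ofReal_ne_top, lintegral_gauss]
    _ = ENNReal.ofReal (Real.exp (104 * n) * Real.pi ^ ((n : ℝ) / 2) *
          ∑ N ∈ P, ∏ i, Real.exp (-c i) ^ N i) := by
        rw [Finset.mul_sum, ENNReal.ofReal_sum_of_nonneg (fun N _ => by positivity)]
        refine Finset.sum_congr rfl fun N _ => ?_
        rw [← ENNReal.ofReal_mul (by positivity)]
        congr 1
        ring
    _ ≤ _ := by
        apply ENNReal.ofReal_le_ofReal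
        refine mul_le_mul_of_nonneg_left ?_ (by positivity)
        rw [hP, ← Finset.prod_univ_sum (fun _ : ι => Finset.range L)
          (fun i k => Real.exp (-c i) ^ k)]
        refine Finset.prod_le_prod (fun i _ => Finset.sum_nonneg fun _ _ => by positivity)
          fun i _ => ?_
        have hlt : Real.exp (-c i) < 1 := by
          rw [← Real.exp_zero]
          apply Real.exp_lt_exp.2
          linarith [hc1 i]
        have hs := (summable_geometric_of_lt_one (Real.exp_pos (-c i)).le hlt).sum_le_tsum
          (Finset.range L) (fun k _ => by positivity)
        rwa [tsum_geometric_of_lt_one (Real.exp_pos (-c i)).le hlt] at hs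

/-- Comparing the squared factor with the target factor. -/
lemma factor_bound (p : ℝ) (hp0 : 0 ≤ p) (hp : p ≤ 1 / 2) :
    (1 - p ^ 2)⁻¹ * (1 - p ^ 2)⁻¹ ≤ (1 - p)⁻¹ := by
  rw [← mul_inv]
  apply inv_anti₀ (by linarith)
  have : 0 ≤ p * (1 - p) * (1 - p - p ^ 2) := by
    apply mul_nonneg (mul_nonneg hp0 (by linarith))
    nlinarith
  nlinarith

/-- volume bound for the body
`K = conv{±v₁,…,±v_M, ±n e₁,…,±n e_n}` with `0 < |vᵢ| ≤ n`:
`|4K| ≤ cⁿ ∏ᵢ (1 − e^{−25n²/(2|vᵢ|²)})⁻¹`. -/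
theorem volume_conv_hull_bound :
    ∃ c : ℝ, 0 < c ∧ ∀ n : ℕ, 2 ≤ n → ∀ M : ℕ,
      ∀ v : Fin M → EuclideanSpace ℝ (Fin n),
        (∀ i, v i ≠ 0) → (∀ i, ‖v i‖ ≤ n) →
        volume ((4 : ℝ) •
            convexHull ℝ
              (Set.range v ∪ (-Set.range v) ∪
                Set.range (fun j : Fin n => (n : ℝ) • EuclideanSpace.single j (1 : ℝ)) ∪
                (-Set.range (fun j : Fin n =>
                  (n : ℝ) • EuclideanSpace.single j (1 : ℝ))))) ≤
          ENNReal.ofReal (c ^ n *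
            ∏ i : Fin M, (1 - Real.exp (-(25 * n ^ 2) / (2 * ‖v i‖ ^ 2)))⁻¹) := by
  refine ⟨Real.exp 104 * Real.pi ^ ((1 : ℝ) / 2) * 2, by positivity, ?_⟩
  intro n hn M v hv hvn
  have hn0 : (0 : ℝ) < n := by exact_mod_cast (by omega : 0 < n)
  set e : Fin n → EuclideanSpace ℝ (Fin n) :=
    fun j => (n : ℝ) • EuclideanSpace.single j (1 : ℝ) with he
  have hen : ∀ j, ‖e j‖ = n := by
    intro j
    simp [he, norm_smul]
  set u : Fin M ⊕ Fin n → EuclideanSpace ℝ (Fin n) := Sum.elim v e with hu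
  have hun : ∀ i, ‖u i‖ ≤ n := by
    rintro (i | j)
    · exact hvn i
    · exact (hen j).le
  have hu0 : ∀ i, u i ≠ 0 := by
    rintro (i | j)
    · exact hv i
    · intro h
      have h' : e j = 0 := h
      have := hen j
      rw [h', norm_zero] at this
      linarith
  set p : Fin M ⊕ Fin n → ℝ := fun i => Real.exp (-(25 * n ^ 2) / (2 * ‖u i‖ ^ 2)) with hp
  have hp2 : ∀ i, p i ≤ 1 / 2 := by
    intro i
    have h1 : 0 < ‖u i‖ := norm_pos_iff.2 (hu0 i)
    have h2 : -(25 * (n : ℝ) ^ 2) / (2 * ‖u i‖ ^ 2) ≤ -1 := by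
      rw [div_le_iff₀ (by positivity)]
      nlinarith [hun i]
    have h3 : Real.exp (-1) ≤ 1 / 2 := by
      rw [Real.exp_neg, one_div]
      apply inv_anti₀ (by norm_num)
      have := Real.add_one_le_exp (1 : ℝ)
      linarith
    exact (Real.exp_le_exp.2 h2).trans h3
  have hp0 : ∀ i, 0 ≤ p i := fun i => (Real.exp_pos _).le
  have hsq : ∀ i, Real.exp (-(25 * n ^ 2 / ‖u i‖ ^ 2)) = p i ^ 2 := by
    intro i
    have h1 : ‖u i‖ ≠ 0 := norm_ne_zero_iff.2 (hu0 i)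
    simp only [hp]
    rw [← Real.exp_nat_mul]
    congr 1
    push_cast
    field_simp
  set w : (Fin M ⊕ Fin n) ⊕ (Fin M ⊕ Fin n) → EuclideanSpace ℝ (Fin n) :=
    Sum.elim u (fun i => -u i) with hw
  have main := general_bound n hn w
    (by rintro (i | i)
        · exact hu0 i
        · exact neg_ne_zero.2 (hu0 i))
    (by rintro (i | i)
        · exact hun i
        · exact (norm_neg (u i)).trans_le (hun i))
  refine le_trans (measure_mono (smul_set_mono (convexHull_mono ?_))) (main.trans ?_)
  · rintro y (((⟨i, rfl⟩ | ⟨i, hi⟩) | ⟨j, rfl⟩) | ⟨j, hj⟩)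
    · exact ⟨Sum.inl (Sum.inl i), rfl⟩
    · exact ⟨Sum.inr (Sum.inl i), neg_eq_iff_eq_neg.2 hi⟩
    · exact ⟨Sum.inl (Sum.inr j), rfl⟩
    · exact ⟨Sum.inr (Sum.inr j), neg_eq_iff_eq_neg.2 hj⟩
  · apply ENNReal.ofReal_le_ofReal
    have hprod : ∏ i, (1 - Real.exp (-(25 * (n : ℝ) ^ 2 / ‖w i‖ ^ 2)))⁻¹ ≤
        2 ^ n * ∏ i : Fin M, (1 - p (Sum.inl i))⁻¹ := by
      rw [Fintype.prod_sum_type]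
      simp only [hw, Sum.elim_inl, Sum.elim_inr, norm_neg, hsq]
      rw [← Finset.prod_mul_distrib]
      have h1 : ∏ i, ((1 - p i ^ 2)⁻¹ * (1 - p i ^ 2)⁻¹) ≤ ∏ i, (1 - p i)⁻¹ :=
        Finset.prod_le_prod (fun i _ => mul_self_nonneg _)
          fun i _ => factor_bound _ (hp0 i) (hp2 i)
      refine h1.trans ?_
      rw [Fintype.prod_sum_type, mul_comm]
      have hnn : ∀ i, 0 ≤ (1 - p i)⁻¹ := fun i => inv_nonneg.2 (by linarith [hp2 i])
      refine mul_le_mul_of_nonneg_right ?_ (Finset.prod_nonneg fun i _ => hnn _)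
      have h2 : ∏ j : Fin n, (1 - p (Sum.inr j))⁻¹ ≤ ∏ _j : Fin n, (2 : ℝ) := by
        refine Finset.prod_le_prod (fun j _ => hnn _) fun j _ => ?_
        rw [inv_le_comm₀ (by linarith [hp2 (Sum.inr j)]) (by norm_num)]
        linarith [hp2 (Sum.inr j)]
      simpa using h2
    have hpi : Real.pi ^ ((n : ℝ) / 2) = (Real.pi ^ ((1 : ℝ) / 2)) ^ n := by
      rw [← Real.rpow_mul_natCast Real.pi_pos.le]
      congr 1
      ring
    have hex : Real.exp (104 * n) = Real.exp 104 ^ n := by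
      rw [← Real.exp_nat_mul, mul_comm]
    refine (mul_le_mul_of_nonneg_left hprod (by positivity)).trans_eq ?_
    rw [hpi, hex, mul_pow, mul_pow, mul_assoc, mul_assoc, mul_assoc]
    rfl
end
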